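/- There is a family 𝓕 of cardinality 𝔠 (the cardinality of the continuum) consisting of pairwise non-homeomorphic endpoint rigid smooth fans. Moreover, 𝓕 can be chosen so that E(X) is homeomorphic to the natural numbers (countably infinite discrete) for every X ∈ 𝓕; alternatively, so that E(X) is homeomorphic to the space of irrational numbers for every X ∈ 𝓕; alternatively, so that E(X) is homeomorphic to the product of the Cantor set with the natural numbers for every X ∈ 𝓕. -/

import Mathlib

/-!
Every fan here has the legs of slope `c i` and height `φ i`, where `c i` lies in the Cantor set, and
its endpoints are the tips of the legs (`FanData.endpoints_eq`). A homeomorphism of such fans fixes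
the vertex and maps legs to legs and limits of tips to limits of tips. Hence the number of points of
a leg, apart from its two ends, at which tips accumulate (the size of its *trace*) is an invariant.
If the legs in some set `D` have traces of sizes not shared by any other leg, their tips are fixed
by every self-homeomorphism, and so are the limits of these tips; if each leg contains such a limit,
the fan is endpoint rigid (`FanData.endpointRigid`).

To obtain fans of this kind, start from a *seed* (`IsSeed`): a family of legs indexed by a space `P`
with a countable dense family of distinguished legs whose trace is empty, the traces of the
other legs being empty or infinite. Attach, to each distinguished leg, infinitely many copies of the
seed that accumulate at exactly `A n` interior points of this leg, where `n` is the number of the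
leg; then do the same with the distinguished legs of the new copies, and so on. The copies are
indexed by the vertices of a tree (`Node`), so the legs are indexed by `Node ι × P`, with `Node ι`
countable and discrete, and this product is homeomorphic to the space of endpoints. The position of
a leg is encoded by a binary sequence recording the path in the tree (`code`), and heights decrease
along the tree. The `n`-th distinguished leg now has trace of size `A n`, while all other legs still
have empty or infinite trace. For injective and positive `A` the fan is therefore rigid, and the set
of values of `A` is an invariant of the fan; there are continuum many such sets
(`IsSeed.exists_family`).

The three kinds of endpoint spaces arise from three seeds: a single leg, for `ℕ`; legs of equal
height over the Cantor set; and, for the irrationals, a seed indexed by the Baire space `ℕ → ℕ`,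
whose heights are upper semicontinuous but discontinuous over a compact set of positions. The
irrationals are identified with the Baire space through the Alexandrov–Urysohn theorem
(`nonempty_homeomorph_baire`).
-/

open Set Topology

noncomputable section

namespace SmoothFanPaper

/-- `A` is an arc (a homeomorphic copy of `[0,1]`) with endpoints `a` and `b`. -/
def IsArc {α : Type*} [TopologicalSpace α] (A : Set α) (a b : α) : Prop :=
  ∃ h : (Set.Icc (0:ℝ) 1) ≃ₜ A,
    (h ⟨0, Set.left_mem_Icc.mpr zero_le_one⟩ : α) = a ∧
    (h ⟨1, Set.right_mem_Icc.mpr zero_le_one⟩ : α) = b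

/-- The order of `x` in `X` is at least `n`: there are `n` arcs contained in `X`, each with
`x` as an endpoint, which pairwise meet only in `x`. -/
def OrderAtLeast {α : Type*} [TopologicalSpace α] (X : Set α) (x : α) (n : ℕ) : Prop :=
  ∃ A : Fin n → Set α, (∀ i, A i ⊆ X) ∧ (∀ i, ∃ b, IsArc (A i) x b) ∧
    ∀ i j, i ≠ j → A i ∩ A j = {x}

/-- The set of endpoints of `X`: points of order exactly `1`. -/
def Endpoints {α : Type*} [TopologicalSpace α] (X : Set α) : Set α :=
  {x | x ∈ X ∧ OrderAtLeast X x 1 ∧ ¬ OrderAtLeast X x 2}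

/-- The Cantor fan: the union of all straight-line segments from the origin to the points of
`cantorSet × {1}` in the plane. -/
def CantorFan : Set (ℝ × ℝ) :=
  {q | ∃ c ∈ cantorSet, ∃ t ∈ Set.Icc (0:ℝ) 1, q = (t * c, t)}

/-- The cone point of the Cantor fan. -/
def fanVertex : ℝ × ℝ := (0, 0)

/-- A smooth fan: a non-degenerate subcontinuum of the Cantor fan containing the cone point,
whose cone point (the vertex) has order at least 2.  (Every statement below about smooth fans
is invariant under homeomorphisms, so we may realize all smooth fans concretely as such
subcontinua.) -/
structure IsSmoothFan (X : Set (ℝ × ℝ)) : Prop where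
  subset_fan : X ⊆ CantorFan
  isCompact : IsCompact X
  isConnected : IsConnected X
  nondegenerate : ∃ x ∈ X, ∃ y ∈ X, x ≠ y
  vertex_mem : fanVertex ∈ X
  vertex_order : OrderAtLeast X fanVertex 2

/-- Two subsets of `(0,1)` are order isomorphic if some order preserving self-homeomorphism
of `[0,1]` maps one onto the other. -/
def OrderIsomorphic (A B : Set ℝ) : Prop :=
  ∃ h : (Set.Icc (0:ℝ) 1) ≃ₜ (Set.Icc (0:ℝ) 1), StrictMono h ∧
    Subtype.val '' (⇑h '' (Subtype.val ⁻¹' A)) = B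

/-- The canonical parametrization of (subsets of) the leg of the Cantor fan through `e`:
a point of the leg is sent to its height, rescaled so that `e` is at height `1`. -/
def legParam (e : ℝ × ℝ) (S : Set (ℝ × ℝ)) : Set ℝ :=
  (fun q : ℝ × ℝ => q.2 / e.2) '' S

/-- The trace of the closure of a set `T` on the open leg `pe ∖ {p, e}` (where `p` is the
vertex and `pe = segment ℝ p e` is the unique arc in a smooth fan from `p` to an endpoint
`e`), viewed as a subset of `(0,1)` via the canonical parametrization of the leg. -/
def legTrace (T : Set (ℝ × ℝ)) (e : ℝ × ℝ) : Set ℝ :=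
  legParam e ((closure T ∩ segment ℝ fanVertex e) \ {fanVertex, e})

/-- `K` enumerates a countably infinite set `𝒦` of compact subsets of `(0,1)`, no two of
which are order isomorphic. -/
def KFamily (K : ℕ → Set ℝ) : Prop :=
  (∀ n, IsCompact (K n) ∧ K n ⊆ Set.Ioo (0:ℝ) 1) ∧
    ∀ m n, m ≠ n → ¬ OrderIsomorphic (K m) (K n)

/-- `X` is a `𝒦`-fan with witnessing endpoint set `E_𝒦 = {e n : n ∈ ℕ}`. -/
structure IsKFan (K : ℕ → Set ℝ) (X : Set (ℝ × ℝ)) (e : ℕ → ℝ × ℝ) : Prop where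
  fan : IsSmoothFan X
  mem_endpoints : ∀ n, e n ∈ Endpoints X
  trace_iso : ∀ n, OrderIsomorphic (legTrace (Endpoints X) (e n)) (K n)
  trace_not_iso : ∀ x ∈ Endpoints X \ Set.range e, ∀ n,
    ¬ OrderIsomorphic (legTrace (Endpoints X) x) (K n)
  meets_closure : ∀ x ∈ Endpoints X \ Set.range e,
    ((closure (Set.range e) ∩ segment ℝ fanVertex x) \ {fanVertex}).Nonempty

/-- A smooth fan is endpoint rigid if every self-homeomorphism fixes every endpoint. -/
def EndpointRigid (X : Set (ℝ × ℝ)) : Prop :=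
  ∀ h : X ≃ₜ X, ∀ x : X, (x : ℝ × ℝ) ∈ Endpoints X → ((h x : X) : ℝ × ℝ) = (x : ℝ × ℝ)

/-- Complete Erdős space `𝔈_c`: the points of the Hilbert space `ℓ²` all of whose
coordinates lie in `{0} ∪ {1/m : m ≥ 1}`. -/
def ErdosSpace : Set (lp (fun _ : ℕ => ℝ) 2) :=
  {x | ∀ n : ℕ, x n = 0 ∨ ∃ m : ℕ, 0 < m ∧ x n = 1 / m}

/-- `z` is a point of zero-dimensionality of the space it lives in: it has a neighborhood
basis of clopen subsets. -/
def ZeroDimPointAt {α : Type*} [TopologicalSpace α] (z : α) : Prop :=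
  ∀ U ∈ nhds z, ∃ V : Set α, IsClopen V ∧ z ∈ V ∧ V ⊆ U
/-- `L₀^φ = {(x,y) : x ∈ C, 0 ≤ y ≤ φ(x)}`, over the Cantor set. -/
def L0 (φ : ℝ → ℝ) : Set (ℝ × ℝ) :=
  {q | q.1 ∈ cantorSet ∧ 0 ≤ q.2 ∧ q.2 ≤ φ q.1}

/-- `G₀^φ = {(x,φ(x)) : x ∈ C, φ(x) > 0}`, over the Cantor set. -/
def G0 (φ : ℝ → ℝ) : Set (ℝ × ℝ) :=
  {q | q.1 ∈ cantorSet ∧ 0 < q.2 ∧ q.2 = φ q.1}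

/-- The setoid on `L₀^φ` identifying the set `C × {0}` to a point. -/
def L0Setoid (φ : ℝ → ℝ) : Setoid (L0 φ) where
  r a b := a = b ∨ ((a : ℝ × ℝ).2 = 0 ∧ (b : ℝ × ℝ).2 = 0)
  iseqv := by
    constructor
    · exact fun _ => Or.inl rfl
    · rintro a b (rfl | ⟨h1, h2⟩)
      · exact Or.inl rfl
      · exact Or.inr ⟨h2, h1⟩
    · rintro a b c (rfl | ⟨h1, h2⟩) (rfl | ⟨h3, h4⟩)
      · exact Or.inl rfl
      · exact Or.inr ⟨h3, h4⟩
      · exact Or.inr ⟨h1, h2⟩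
      · exact Or.inr ⟨h1, h4⟩

/-- The quotient space `L₀^φ / (C × {0})`. -/
def L0Quot (φ : ℝ → ℝ) : Type := Quotient (L0Setoid φ)

instance (φ : ℝ → ℝ) : TopologicalSpace (L0Quot φ) :=
  inferInstanceAs (TopologicalSpace (Quotient (L0Setoid φ)))

/-- The quotient projection `L₀^φ → L₀^φ / (C × {0})`. -/
def L0Proj (φ : ℝ → ℝ) : L0 φ → L0Quot φ := Quotient.mk (L0Setoid φ)

/-- The setoid on `E × [0,1]` identifying `E × {0}` to a point. -/
def coneSetoid (E : Type*) : Setoid (E × Set.Icc (0:ℝ) 1) where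
  r a b := a = b ∨ ((a.2 : ℝ) = 0 ∧ (b.2 : ℝ) = 0)
  iseqv := by
    constructor
    · exact fun _ => Or.inl rfl
    · rintro a b (rfl | ⟨h1, h2⟩)
      · exact Or.inl rfl
      · exact Or.inr ⟨h2, h1⟩
    · rintro a b c (rfl | ⟨h1, h2⟩) (rfl | ⟨h3, h4⟩)
      · exact Or.inl rfl
      · exact Or.inr ⟨h3, h4⟩
      · exact Or.inr ⟨h1, h2⟩
      · exact Or.inr ⟨h1, h4⟩

/-- The cone over a space `E`: the quotient `(E × [0,1]) / (E × {0})`. -/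
def Cone (E : Type*) [TopologicalSpace E] : Type _ := Quotient (coneSetoid E)

instance (E : Type*) [TopologicalSpace E] : TopologicalSpace (Cone E) :=
  inferInstanceAs (TopologicalSpace (Quotient (coneSetoid E)))

/-- A point of the one-point compactification of the disjoint union of the fans `X i`
is to be glued iff it is `∞` or the vertex of one of the fans. -/
def isGluedPoint {ι : Type*} (X : ι → Set (ℝ × ℝ)) :
    OnePoint (Σ i : ι, X i) → Prop :=
  fun a => a.elim True (fun q => (q.2 : ℝ × ℝ) = fanVertex)

/-- The setoid gluing the vertices (and the point at infinity) of the fans `X i`. -/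
def fanSumSetoid {ι : Type*} (X : ι → Set (ℝ × ℝ)) :
    Setoid (OnePoint (Σ i : ι, X i)) where
  r a b := a = b ∨ (isGluedPoint X a ∧ isGluedPoint X b)
  iseqv := by
    constructor
    · exact fun _ => Or.inl rfl
    · rintro a b (rfl | ⟨h1, h2⟩)
      · exact Or.inl rfl
      · exact Or.inr ⟨h2, h1⟩
    · rintro a b c (rfl | ⟨h1, h2⟩) (rfl | ⟨h3, h4⟩)
      · exact Or.inl rfl
      · exact Or.inr ⟨h3, h4⟩
      · exact Or.inr ⟨h1, h2⟩
      · exact Or.inr ⟨h1, h4⟩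

/-- The sum `Σᵢ Xᵢ` of a (finite or countably infinite) family of smooth fans: the quotient of
the one-point compactification of their disjoint union identifying the set consisting of all
the vertices and the point at infinity to a single point.  (For a finite family, `∞` is an
isolated point which is absorbed by the vertex class, so this agrees with the quotient of the
plain disjoint union identifying the vertices.) -/
def FanSum {ι : Type*} (X : ι → Set (ℝ × ℝ)) : Type _ := Quotient (fanSumSetoid X)

instance {ι : Type*} (X : ι → Set (ℝ × ℝ)) : TopologicalSpace (FanSum X) :=
  inferInstanceAs (TopologicalSpace (Quotient (fanSumSetoid X)))

/-- A family of spaces (realized as subsets of the plane) is pairwise non-homeomorphic. -/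
def PairwiseNonHomeomorphic (F : Set (Set (ℝ × ℝ))) : Prop :=
  ∀ X ∈ F, ∀ Y ∈ F, X ≠ Y → IsEmpty (↥X ≃ₜ ↥Y)

/-! ### The Baire space and the irrationals -/

section

/-- In a zero-dimensional separable metric space, a clopen set which is not compact splits into
infinitely many nonempty clopen pieces of small diameter: disjoint the members of a fine clopen
refinement of an open cover without finite subcover; infinitely many pieces survive. -/
theorem exists_clopen_split {Y : Type*} [MetricSpace Y] [SecondCountableTopology Y]
    (hz : ∀ y : Y, ∀ U ∈ 𝓝 y, ∃ V : Set Y, IsClopen V ∧ y ∈ V ∧ V ⊆ U)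
    {U : Set Y} (hU : IsClopen U) (hnc : ¬ IsCompact U) {ε : ℝ} (hε : 0 < ε) :
    ∃ S : ℕ → Set Y, (∀ n, IsClopen (S n)) ∧ (∀ n, (S n).Nonempty) ∧
      Pairwise (fun m n => Disjoint (S m) (S n)) ∧ (⋃ n, S n) = U ∧
      ∀ n, ∀ x ∈ S n, ∀ y ∈ S n, dist x y ≤ ε := by
  rw [isCompact_iff_finite_subcover] at hnc
  push Not at hnc
  obtain ⟨ι, V, hVo, hUV, hV⟩ := hnc
  have h1 : ∀ y : U, ∃ W : Set Y, IsClopen W ∧ (y : Y) ∈ W ∧ W ⊆ U ∧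
      (∃ i, W ⊆ V i) ∧ ∀ a ∈ W, ∀ b ∈ W, dist a b ≤ ε := by
    intro y
    obtain ⟨i, hi⟩ := mem_iUnion.1 (hUV y.2)
    obtain ⟨W, hW, hyW, hWs⟩ := hz y (U ∩ V i ∩ Metric.ball y (ε / 2))
      (Filter.inter_mem (Filter.inter_mem (hU.isOpen.mem_nhds y.2) ((hVo i).mem_nhds hi))
        (Metric.ball_mem_nhds _ (half_pos hε)))
    refine ⟨W, hW, hyW, fun a ha => (hWs ha).1.1, ⟨i, fun a ha => (hWs ha).1.2⟩, ?_⟩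
    intro a ha b hb
    have h2 : dist a y < ε / 2 := (hWs ha).2
    have h3 : dist b y < ε / 2 := (hWs hb).2
    have := dist_triangle_right a b y
    linarith
  choose W hW hyW hWU hWV hWd using h1
  obtain ⟨T, hTc, hT⟩ := TopologicalSpace.isOpen_iUnion_countable W (fun y => (hW y).isOpen)
  have hWall : (⋃ y, W y) = U :=
    Subset.antisymm (iUnion_subset hWU) fun y hy => mem_iUnion.2 ⟨⟨y, hy⟩, hyW ⟨y, hy⟩⟩
  have hTne : T.Nonempty := by
    by_contra hne
    rw [not_nonempty_iff_eq_empty] at hne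
    subst hne
    simp only [mem_empty_iff_false, iUnion_of_empty, iUnion_empty] at hT
    rw [← hT] at hWall
    exact hV ∅ (by simp [← hWall])
  obtain ⟨f, rfl⟩ := hTc.exists_eq_range hTne
  have hA : (⋃ n, W (f n)) = U := by
    rw [← hWall, ← hT, biUnion_range]
  set D : ℕ → Set Y := disjointed (fun n => W (f n)) with hD
  have hDU : (⋃ n, D n) = U := by rw [hD, iUnion_disjointed, hA]
  have hDW : ∀ n, D n ⊆ W (f n) := fun n => disjointed_subset _ n
  have hDc : ∀ n, IsClopen (D n) := by
    intro n
    rw [hD]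
    exact disjointedRec (p := IsClopen) (fun _ _ ht => ht.diff (hW _)) (hW _)
  have hNinf : {n | (D n).Nonempty}.Infinite := by
    intro hfin
    choose i hi using hWV
    classical
    apply hV (hfin.toFinset.image fun n => i (f n))
    intro y hy
    rw [← hDU] at hy
    obtain ⟨n, hn⟩ := mem_iUnion.1 hy
    simp only [Finset.mem_image, Finite.mem_toFinset, iUnion_exists,
      mem_iUnion]
    exact ⟨i (f n), n, ⟨⟨y, hn⟩, rfl⟩, hi _ (hDW n hn)⟩
  have : Infinite {n | (D n).Nonempty} := hNinf.to_subtype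
  let e := Nat.Subtype.orderIsoOfNat {n | (D n).Nonempty}
  refine ⟨fun k => D (e k), fun k => hDc _, fun k => (e k).2, ?_, ?_, ?_⟩
  · intro a b hab
    exact disjoint_disjointed (fun n => W (f n)) (fun h => hab (e.injective (Subtype.ext h)))
  · rw [← hDU]
    apply Subset.antisymm
    · exact iUnion_subset fun k => subset_iUnion D _
    · refine iUnion_subset fun n y hy => ?_
      obtain ⟨k, hk⟩ := e.surjective ⟨n, y, hy⟩
      exact mem_iUnion.2 ⟨k, by rw [hk]; exact hy⟩
  · intro k x hx y hy
    exact hWd _ x (hDW _ hx) y (hDW _ hy)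

/-- The Alexandrov–Urysohn characterization of the Baire space `ℕ → ℕ`. -/
theorem nonempty_homeomorph_baire {Y : Type*} [TopologicalSpace Y] [PolishSpace Y]
    [Nonempty Y]
    (hz : ∀ y : Y, ∀ U ∈ 𝓝 y, ∃ V : Set Y, IsClopen V ∧ y ∈ V ∧ V ⊆ U)
    (hnc : ∀ U : Set Y, IsClopen U → U.Nonempty → ¬ IsCompact U) :
    Nonempty ((ℕ → ℕ) ≃ₜ Y) := by
  let _ := TopologicalSpace.upgradeIsCompletelyMetrizable Y
  have hs : ∀ (U : {U : Set Y // IsClopen U ∧ U.Nonempty}) (n : ℕ), ∃ S : ℕ → Set Y,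
      (∀ n, IsClopen (S n)) ∧ (∀ n, (S n).Nonempty) ∧
      Pairwise (fun m n => Disjoint (S m) (S n)) ∧ (⋃ n, S n) = U ∧
      ∀ k, ∀ x ∈ S k, ∀ y ∈ S k, dist x y ≤ 1 / ((n : ℝ) + 1) := fun U n =>
    exists_clopen_split hz U.2.1 (hnc U U.2.1 U.2.2) (by positivity)
  choose S hSc hSn hSd hSU hSdist using hs
  let A : List ℕ → {U : Set Y // IsClopen U ∧ U.Nonempty} := fun l =>
    List.rec ⟨univ, isClopen_univ, univ_nonempty⟩
      (fun a l U => ⟨S U l.length a, hSc U _ _, hSn U _ _⟩) l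
  have hA0 : (A [] : Set Y) = univ := rfl
  have hA1 : ∀ a l, (A (a :: l) : Set Y) = S (A l) l.length a := fun a l => rfl
  let B : List ℕ → Set Y := fun l => (A l).1
  have hanti : CantorScheme.Antitone B := by
    intro l a
    change (A (a :: l)).1 ⊆ (A l).1
    rw [hA1, ← hSU (A l) l.length]
    exact subset_iUnion (S (A l) l.length) a
  have hdisj : CantorScheme.Disjoint B := by
    intro l a b hab
    exact hSd (A l) l.length hab
  have hcl : CantorScheme.ClosureAntitone B := hanti.closureAntitone fun l => (A l).2.1.isClosed
  have hsmall : ∀ x : ℕ → ℕ, ∀ n, ∀ y ∈ B (PiNat.res x (n + 1)), ∀ z ∈ B (PiNat.res x (n + 1)),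
      dist y z ≤ 1 / ((n : ℝ) + 1) := by
    intro x n y hy z hz
    have := hSdist (A (PiNat.res x n)) (PiNat.res x n).length (x n) y hy z hz
    rwa [PiNat.res_length] at this
  have hvan : CantorScheme.VanishingDiam B := by
    intro x
    rw [← Filter.tendsto_add_atTop_iff_nat 1]
    have h1 : Filter.Tendsto (fun n : ℕ => ENNReal.ofReal (1 / ((n : ℝ) + 1))) Filter.atTop (𝓝 0) := by
      have := ENNReal.tendsto_ofReal (tendsto_one_div_add_atTop_nhds_zero_nat (𝕜 := ℝ))
      simpa using this
    refine tendsto_of_tendsto_of_tendsto_of_le_of_le tendsto_const_nhds h1 (fun _ => zero_le) ?_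
    intro n
    refine Metric.ediam_le fun y hy z hz => ?_
    rw [edist_dist]
    exact ENNReal.ofReal_le_ofReal (hsmall x n y hy z hz)
  have htot := hcl.map_of_vanishingDiam hvan fun l => (A l).2.2
  have htot' : ∀ x, x ∈ (CantorScheme.inducedMap B).1 := fun x => htot ▸ mem_univ x
  let g : (ℕ → ℕ) → Y := fun x => (CantorScheme.inducedMap B).2 ⟨x, htot' x⟩
  have hg : ∀ x n, g x ∈ B (PiNat.res x n) := fun x n => CantorScheme.map_mem _ n
  have hgc : Continuous g := hvan.map_continuous.comp (by fun_prop)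
  have hguniq : ∀ x y, (∀ n, y ∈ B (PiNat.res x n)) → g x = y := by
    intro x y hy
    refine eq_of_forall_dist_le fun ε hε => ?_
    obtain ⟨n, hn⟩ := hvan.dist_lt ε hε x
    exact (hn _ (hg x n) _ (hy n)).le
  have hbranch : ∀ y, ∃ x : ℕ → ℕ, ∀ n, y ∈ B (PiNat.res x n) := by
    intro y
    have h1 : ∀ l, ∃ a, y ∈ B l → y ∈ B (a :: l) := by
      intro l
      by_cases hy : y ∈ B l
      · have hy' : y ∈ ⋃ n, S (A l) l.length n := by rw [hSU]; exact hy
        obtain ⟨a, ha⟩ := mem_iUnion.1 hy'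
        exact ⟨a, fun _ => ha⟩
      · exact ⟨0, fun h => absurd h hy⟩
    choose b hb using h1
    let L : ℕ → List ℕ := fun n => Nat.rec [] (fun _ l => b l :: l) n
    have hL : ∀ n, L (n + 1) = b (L n) :: L n := fun n => rfl
    have hres : ∀ n, PiNat.res (fun n => b (L n)) n = L n := by
      intro n
      induction n with
      | zero => rfl
      | succ n ih => rw [PiNat.res_succ, ih, hL]
    refine ⟨fun n => b (L n), fun n => ?_⟩
    rw [hres]
    induction n with
    | zero => exact mem_univ y
    | succ n ih => exact hb _ ih
  have hres_eq : ∀ n x x' y, y ∈ B (PiNat.res x n) → y ∈ B (PiNat.res x' n) →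
      PiNat.res x n = PiNat.res x' n := by
    intro n x x' y
    induction n with
    | zero => intro _ _; rfl
    | succ n ih =>
      intro h1 h2
      rw [PiNat.res_succ] at h1 h2
      have h3 := ih (hanti _ _ h1) (hanti _ _ h2)
      rw [PiNat.res_succ, PiNat.res_succ, h3]
      rw [h3] at h1
      by_contra hne
      have hne' : x n ≠ x' n := fun h => hne (by rw [h])
      exact Set.disjoint_left.1 (hdisj _ hne') h1 h2
  have hginj : Function.Injective g := by
    intro x x' h
    apply PiNat.res_injective
    funext n
    exact hres_eq n x x' (g x) (hg x n) (h ▸ hg x' n)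
  have hgsurj : Function.Surjective g := fun y =>
    let ⟨x, hx⟩ := hbranch y
    ⟨x, hguniq x y hx⟩
  refine ⟨(Equiv.ofBijective g ⟨hginj, hgsurj⟩).toHomeomorphOfContinuousOpen hgc ?_⟩
  change IsOpenMap g
  rw [(PiNat.isTopologicalBasis_cylinders (fun _ : ℕ => ℕ)).isOpenMap_iff]
  rintro _ ⟨x, n, rfl⟩
  have : g '' PiNat.cylinder x n = B (PiNat.res x n) := by
    apply Subset.antisymm
    · rintro _ ⟨x', hx', rfl⟩
      rw [PiNat.cylinder_eq_res] at hx'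
      have h2 : PiNat.res x' n = PiNat.res x n := hx'
      rw [← h2]
      exact hg x' n
    · intro y hy
      obtain ⟨x', hx'⟩ := hbranch y
      refine ⟨x', ?_, hguniq x' y hx'⟩
      rw [PiNat.cylinder_eq_res]
      exact hres_eq n x' x y (hx' n) hy
  rw [this]
  exact (A _).2.1.isOpen

/-- The irrationals embed as a closed subset of `ℝ × (ℚ → ℝ)` by adding the coordinates
`(x - q)⁻¹`. -/
theorem polishSpace_irrational : PolishSpace {x : ℝ // Irrational x} := by
  have hne : ∀ (x : {x : ℝ // Irrational x}) (q : ℚ), (x : ℝ) - q ≠ 0 := fun x q h =>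
    x.2 ⟨q, (sub_eq_zero.1 h).symm⟩
  let f : {x : ℝ // Irrational x} → ℝ × (ℚ → ℝ) := fun x => (x, fun q => ((x : ℝ) - q)⁻¹)
  have hf : Continuous f := by
    refine continuous_subtype_val.prodMk (continuous_pi fun q => ?_)
    exact Continuous.inv₀ (by fun_prop) fun x => hne x q
  have hfi : IsInducing f := IsInducing.of_comp hf continuous_fst IsInducing.subtypeVal
  have hinj : Function.Injective f := fun x y h => Subtype.ext (congrArg Prod.fst h)
  have hr : range f = ⋂ q : ℚ, {p : ℝ × (ℚ → ℝ) | p.2 q * (p.1 - q) = 1} := by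
    ext p
    simp only [mem_range, mem_iInter, mem_ofPred_eq]
    constructor
    · rintro ⟨x, rfl⟩ q
      exact inv_mul_cancel₀ (hne x q)
    · intro h
      have hp : Irrational p.1 := by
        rintro ⟨q, hq⟩
        have := h q
        rw [hq, sub_self, mul_zero] at this
        exact zero_ne_one this
      refine ⟨⟨p.1, hp⟩, Prod.ext rfl (funext fun q => ?_)⟩
      exact (eq_inv_of_mul_eq_one_left (h q)).symm
  have hcl : IsClosed (range f) := by
    rw [hr]
    exact isClosed_iInter fun q => isClosed_eq (by fun_prop) continuous_const
  exact IsClosedEmbedding.polishSpace (f := f) ⟨⟨hfi, hinj⟩, hcl⟩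

theorem nonempty_baire_homeomorph_irrational :
    Nonempty ((ℕ → ℕ) ≃ₜ {x : ℝ // Irrational x}) := by
  have := polishSpace_irrational
  have : Nonempty {x : ℝ // Irrational x} := ⟨⟨_, irrational_sqrt_two⟩⟩
  apply nonempty_homeomorph_baire
  · intro y U hU
    rw [nhds_subtype_eq_comap] at hU
    obtain ⟨T, hT, hTU⟩ := Filter.mem_comap.1 hU
    obtain ⟨l, u, hlu, hs⟩ := mem_nhds_iff_exists_Ioo_subset.1 hT
    obtain ⟨a, hla, hay⟩ := exists_rat_btwn hlu.1
    obtain ⟨b, hyb, hbu⟩ := exists_rat_btwn hlu.2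
    have heq : (Subtype.val ⁻¹' Ioo (a : ℝ) b : Set {x : ℝ // Irrational x}) =
        Subtype.val ⁻¹' Icc (a : ℝ) b := by
      ext x
      simp only [mem_preimage, mem_Ioo, mem_Icc]
      refine ⟨fun h => ⟨h.1.le, h.2.le⟩, fun h => ⟨lt_of_le_of_ne h.1 ?_, lt_of_le_of_ne h.2 ?_⟩⟩
      · exact fun h' => x.2 ⟨a, h'⟩
      · exact fun h' => x.2 ⟨b, h'.symm⟩
    refine ⟨Subtype.val ⁻¹' Ioo (a : ℝ) b, ⟨?_, isOpen_Ioo.preimage continuous_subtype_val⟩,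
      ⟨hay, hyb⟩, fun x hx => hTU (hs ⟨hla.trans hx.1, hx.2.trans hbu⟩)⟩
    rw [heq]
    exact isClosed_Icc.preimage continuous_subtype_val
  · rintro U hU ⟨y, hy⟩ hc
    obtain ⟨V, hV, rfl⟩ := isOpen_induced_iff.1 hU.isOpen
    have hc' := (hc.image continuous_subtype_val).isClosed
    have hsub : closure (Subtype.val '' (Subtype.val ⁻¹' V : Set {x : ℝ // Irrational x})) ⊆
        {x | Irrational x} := by
      rw [hc'.closure_eq]
      rintro _ ⟨x, -, rfl⟩
      exact x.2
    obtain ⟨_, hq, q, rfl⟩ := Rat.denseRange_cast (𝕜 := ℝ).inter_open_nonempty V hV ⟨y, hy⟩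
    refine hsub (?_ : (q : ℝ) ∈ _) ⟨q, rfl⟩
    have hd : Dense {x : ℝ | Irrational x} := dense_irrational
    have := hd.open_subset_closure_inter hV hq
    refine closure_mono ?_ this
    rintro x ⟨hxV, hx⟩
    exact ⟨⟨x, hx⟩, hxV, rfl⟩

end

/-! ### Plane fans and their homeomorphisms -/

section

/-- The point at height `t` on the ray from the origin through `(c, 1)`. -/
def rayPt (c t : ℝ) : ℝ × ℝ := (t * c, t)

/-- The union of the legs of slope `c i` and height `φ i`. -/
def fan {I : Type*} (c φ : I → ℝ) : Set (ℝ × ℝ) :=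
  {q | ∃ i, ∃ t ∈ Icc 0 (φ i), q = rayPt (c i) t}

/-- The upper end of the `i`-th leg. -/
def tip {I : Type*} (c φ : I → ℝ) (i : I) : ℝ × ℝ := rayPt (c i) (φ i)

/-- Slopes and heights for which `fan c φ` is a smooth fan with tips `tip c φ i`. Three legs are
required because a fan with only two legs is an arc, whose homeomorphisms may move the vertex. -/
structure FanData {I : Type*} (c φ : I → ℝ) : Prop where
  inj : Function.Injective c
  mem : ∀ i, c i ∈ cantorSet
  pos : ∀ i, 0 < φ i
  le_one : ∀ i, φ i ≤ 1
  closed : IsClosed (fan c φ)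
  three : ∃ i : Fin 3 → I, Function.Injective i

/-- The points of the `i`-th leg, other than its two ends, at which tips accumulate. -/
def trace {I : Type*} (c φ : I → ℝ) (i : I) : Set (ℝ × ℝ) :=
  {q | 0 < q.2 ∧ q.1 / q.2 = c i ∧ q ≠ tip c φ i ∧ q ∈ closure (range (tip c φ))}

@[simp] theorem rayPt_snd (c t : ℝ) : (rayPt c t).2 = t := rfl

theorem rayPt_slope (c : ℝ) {t : ℝ} (ht : t ≠ 0) : (rayPt c t).1 / (rayPt c t).2 = c := by
  simp [rayPt, ht]

theorem rayPt_injective (c : ℝ) : Function.Injective (rayPt c) := fun _ _ h =>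
  congrArg Prod.snd h

theorem continuous_rayPt (c : ℝ) : Continuous (rayPt c) := by
  unfold rayPt; fun_prop

theorem rayPt_zero (c : ℝ) : rayPt c 0 = fanVertex := by simp [rayPt, fanVertex]

theorem eq_rayPt {q : ℝ × ℝ} (hq : q.2 ≠ 0) : q = rayPt (q.1 / q.2) q.2 := by
  ext <;> simp [rayPt]
  field_simp

/-- Arcs are the injective paths, since a continuous injection of `[0,1]` is an embedding. -/
theorem isArc_iff {α : Type*} [TopologicalSpace α] [T2Space α] {A : Set α} {a b : α} :
    IsArc A a b ↔ ∃ γ : Icc (0:ℝ) 1 → α, Continuous γ ∧ Function.Injective γ ∧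
      range γ = A ∧ γ ⟨0, left_mem_Icc.mpr zero_le_one⟩ = a ∧
      γ ⟨1, right_mem_Icc.mpr zero_le_one⟩ = b := by
  constructor
  · rintro ⟨h, h0, h1⟩
    refine ⟨fun s => h s, by fun_prop, fun s t hst => h.injective (Subtype.ext hst), ?_, h0, h1⟩
    ext x
    constructor
    · rintro ⟨s, rfl⟩
      exact (h s).2
    · intro hx
      exact ⟨h.symm ⟨x, hx⟩, by simp⟩
  · rintro ⟨γ, hγ, hinj, rfl, h0, h1⟩
    exact ⟨(hγ.isClosedEmbedding hinj).isEmbedding.toHomeomorph, h0, h1⟩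

theorem isArc_ray (c : ℝ) {a b : ℝ} (hab : a ≠ b) :
    IsArc (rayPt c '' uIcc a b) (rayPt c a) (rayPt c b) := by
  rw [isArc_iff]
  refine ⟨fun s => rayPt c (AffineMap.lineMap a b (s : ℝ)), ?_, ?_, ?_, ?_, ?_⟩
  · exact (continuous_rayPt c).comp (AffineMap.lineMap_continuous.comp continuous_subtype_val)
  · intro s t hst
    exact Subtype.ext (AffineMap.lineMap_injective ℝ hab (rayPt_injective c hst))
  · rw [← segment_eq_uIcc, segment_eq_image_lineMap, image_image, image_eq_range]
  · simp
  · simp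

theorem isTotallyDisconnected_cantorSet : IsTotallyDisconnected cantorSet := by
  rw [← totallyDisconnectedSpace_subtype_iff]
  exact cantorSetHomeomorphNatToBool.symm.totallyDisconnectedSpace

section

variable {I : Type*} {c φ : I → ℝ}

theorem FanData.exists_index (_H : FanData c φ) {q : ℝ × ℝ} (hq : q ∈ fan c φ) (h0 : q ≠ fanVertex) :
    ∃ i, 0 < q.2 ∧ q.2 ≤ φ i ∧ q = rayPt (c i) q.2 ∧ q.1 / q.2 = c i := by
  obtain ⟨i, t, ht, rfl⟩ := hq
  have h1 : t ≠ 0 := by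
    rintro rfl
    exact h0 (rayPt_zero _)
  exact ⟨i, lt_of_le_of_ne ht.1 h1.symm, ht.2, rfl, rayPt_slope _ h1⟩

theorem pos_of_mem_fan {q : ℝ × ℝ} (hq : q ∈ fan c φ) (h0 : q ≠ fanVertex) : 0 < q.2 := by
  obtain ⟨i, t, ht, rfl⟩ := hq
  refine lt_of_le_of_ne ht.1 fun h => h0 ?_
  have h' : t = 0 := h.symm
  rw [h', rayPt_zero]

theorem ne_vertex_of_pos {q : ℝ × ℝ} (hq : 0 < q.2) : q ≠ fanVertex := by
  rintro rfl
  exact lt_irrefl _ hq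

theorem FanData.tip_mem (H : FanData c φ) (i : I) : tip c φ i ∈ fan c φ :=
  ⟨i, φ i, ⟨(H.pos i).le, le_rfl⟩, rfl⟩

theorem FanData.tip_slope (H : FanData c φ) (i : I) :
    (tip c φ i).1 / (tip c φ i).2 = c i := rayPt_slope _ (H.pos i).ne'

theorem FanData.tip_injective (H : FanData c φ) : Function.Injective (tip c φ) := by
  intro i j h
  apply H.inj
  rw [← H.tip_slope i, ← H.tip_slope j, h]

/-- A connected subset of the fan avoiding the vertex lies on one leg, since its slopes form a
connected subset of the Cantor set. -/
theorem FanData.slope_eq (H : FanData c φ) {S : Set (ℝ × ℝ)} (hS : IsPreconnected S)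
    (hsub : S ⊆ fan c φ) (hv : fanVertex ∉ S) {a b : ℝ × ℝ} (ha : a ∈ S) (hb : b ∈ S) :
    a.1 / a.2 = b.1 / b.2 := by
  have hne : ∀ q ∈ S, q ≠ fanVertex := fun q hq h => hv (h ▸ hq)
  have hcont : ContinuousOn (fun q : ℝ × ℝ => q.1 / q.2) S :=
    continuousOn_fst.div continuousOn_snd fun q hq => (pos_of_mem_fan (hsub hq) (hne q hq)).ne'
  refine isTotallyDisconnected_cantorSet _ ?_ (hS.image _ hcont) (mem_image_of_mem _ ha)
    (mem_image_of_mem _ hb)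
  rintro _ ⟨q, hq, rfl⟩
  obtain ⟨i, -, -, -, h⟩ := H.exists_index (hsub hq) (hne q hq)
  simp only [h]
  exact H.mem i

theorem FanData.leg_subset {a b : ℝ} {i : I} (ha : a ∈ Icc 0 (φ i))
    (hb : b ∈ Icc 0 (φ i)) : rayPt (c i) '' uIcc a b ⊆ fan c φ := by
  rintro _ ⟨t, ht, rfl⟩
  exact ⟨i, t, (ordConnected_Icc.uIcc_subset ha hb) ht, rfl⟩

theorem FanData.order_vertex (H : FanData c φ) : OrderAtLeast (fan c φ) fanVertex 2 := by
  obtain ⟨e, he⟩ := H.three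
  have h0 : ∀ i, (0 : ℝ) ∈ Icc 0 (φ i) := fun i => ⟨le_rfl, (H.pos i).le⟩
  have h1 : ∀ i, φ i ∈ Icc 0 (φ i) := fun i => ⟨(H.pos i).le, le_rfl⟩
  refine ⟨fun n => rayPt (c (e n.castSucc)) '' uIcc 0 (φ (e n.castSucc)),
    fun n => FanData.leg_subset (h0 _) (h1 _), fun n => ?_, ?_⟩
  · refine ⟨rayPt (c (e n.castSucc)) (φ (e n.castSucc)), ?_⟩
    rw [← rayPt_zero (c (e n.castSucc))]
    exact isArc_ray _ (H.pos _).ne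
  · intro m n hmn
    have hc : c (e m.castSucc) ≠ c (e n.castSucc) := by
      intro h
      exact hmn (Fin.castSucc_injective _ (he (H.inj h)))
    ext q
    simp only [mem_inter_iff, mem_singleton_iff]
    constructor
    · rintro ⟨⟨t, -, rfl⟩, ⟨u, -, hu⟩⟩
      have h2 : u = t := congrArg Prod.snd hu
      subst h2
      have h3 : u * c (e n.castSucc) = u * c (e m.castSucc) := congrArg Prod.fst hu
      have h4 : u = 0 := by
        by_contra h
        exact hc (mul_left_cancel₀ h h3).symm
      rw [h4, rayPt_zero]
    · rintro rfl
      exact ⟨⟨0, left_mem_uIcc, rayPt_zero _⟩, ⟨0, left_mem_uIcc, rayPt_zero _⟩⟩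

theorem FanData.order_inner {i : I} {t : ℝ} (h0 : 0 < t) (h1 : t < φ i) :
    OrderAtLeast (fan c φ) (rayPt (c i) t) 2 := by
  have ht : t ∈ Icc 0 (φ i) := ⟨h0.le, h1.le⟩
  refine ⟨![rayPt (c i) '' uIcc t 0, rayPt (c i) '' uIcc t (φ i)], ?_, ?_, ?_⟩
  · intro n
    fin_cases n
    · exact FanData.leg_subset ht ⟨le_rfl, ht.1.trans ht.2⟩
    · exact FanData.leg_subset ht ⟨ht.1.trans ht.2, le_rfl⟩
  · intro n
    fin_cases n
    · exact ⟨_, isArc_ray _ h0.ne'⟩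
    · exact ⟨_, isArc_ray _ h1.ne⟩
  · have key : rayPt (c i) '' uIcc t 0 ∩ rayPt (c i) '' uIcc t (φ i) = {rayPt (c i) t} := by
      rw [← image_inter (rayPt_injective _), uIcc_of_ge h0.le, uIcc_of_le h1.le,
        Icc_inter_Icc_eq_singleton h0.le h1.le, image_singleton]
    intro m n hmn
    fin_cases m <;> fin_cases n
    · exact absurd rfl hmn
    · exact key
    · exact (inter_comm _ _).trans key
    · exact absurd rfl hmn

/-- An arc starting at a tip contains an initial piece of its leg: near the tip it avoids the
vertex, so by connectedness it runs down the leg. -/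
theorem FanData.arc_at_tip (H : FanData c φ) {i : I} {A : Set (ℝ × ℝ)} {b : ℝ × ℝ}
    (hA : A ⊆ fan c φ) (harc : IsArc A (tip c φ i) b) :
    ∃ δ < φ i, ∀ t ∈ Icc δ (φ i), rayPt (c i) t ∈ A := by
  obtain ⟨γ, hγ, hinj, rfl, h0, -⟩ := isArc_iff.1 harc
  let f : ℝ → ℝ × ℝ := fun s => γ (projIcc 0 1 zero_le_one s)
  have hf : Continuous f := hγ.comp continuous_projIcc
  have hf0 : f 0 = tip c φ i := by
    rw [← h0]
    simp only [f]
    rw [projIcc_left]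
  have hpos : ∀ᶠ s in 𝓝 (0 : ℝ), 0 < (f s).2 := by
    have : (fun s => (f s).2) 0 ∈ Ioi (0 : ℝ) := by
      simp only [hf0]
      exact H.pos i
    exact (continuous_snd.comp hf).continuousAt.eventually_mem (isOpen_Ioi.mem_nhds this)
  obtain ⟨ε, hε, hball⟩ := Metric.eventually_nhds_iff.1 hpos
  let d : ℝ := min (ε / 2) 1
  have hd : 0 < d := lt_min (half_pos hε) one_pos
  have hdp : ∀ s ∈ Icc 0 d, 0 < (f s).2 := by
    intro s hs
    apply hball
    rw [Real.dist_eq, sub_zero, abs_of_nonneg hs.1]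
    have := hs.2.trans (min_le_left _ _)
    linarith
  have hfmem : ∀ s, f s ∈ fan c φ := fun s => hA ⟨_, rfl⟩
  have hslope : ∀ s ∈ Icc 0 d, (f s).1 / (f s).2 = c i := by
    intro s hs
    rw [← H.tip_slope i, ← hf0]
    refine H.slope_eq (S := f '' Icc 0 d) (isPreconnected_Icc.image _ hf.continuousOn) ?_ ?_
      (mem_image_of_mem _ hs) (mem_image_of_mem _ ⟨le_rfl, hd.le⟩)
    · rintro _ ⟨s, -, rfl⟩
      exact hfmem s
    · rintro ⟨s, hs, h⟩
      exact ne_vertex_of_pos (hdp s hs) h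
  have hray : ∀ s ∈ Icc 0 d, f s = rayPt (c i) (f s).2 := by
    intro s hs
    rw [← hslope s hs]
    exact eq_rayPt (hdp s hs).ne'
  have hle : (f d).2 ≤ φ i := by
    obtain ⟨j, -, h2, -, h3⟩ := H.exists_index (hfmem d)
      (ne_vertex_of_pos (hdp d ⟨hd.le, le_rfl⟩))
    rw [hslope d ⟨hd.le, le_rfl⟩] at h3
    rwa [H.inj h3]
  have hlt : (f d).2 < φ i := by
    refine lt_of_le_of_ne hle fun h => ?_
    have h1 := hray d ⟨hd.le, le_rfl⟩
    rw [h] at h1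
    have h2 : f d = f 0 := by rw [h1, hf0]; rfl
    have h3 := hinj h2
    rw [projIcc_left, projIcc_of_mem _ ⟨hd.le, min_le_right _ _⟩] at h3
    exact hd.ne' (congrArg Subtype.val h3)
  refine ⟨_, hlt, fun t ht => ?_⟩
  have hivt := intermediate_value_Icc' hd.le (f := fun s => (f s).2)
    (continuous_snd.comp hf).continuousOn
  have h00 : (f 0).2 = φ i := by rw [hf0]; rfl
  simp only [h00] at hivt
  obtain ⟨s, hs, hst⟩ := hivt ht
  simp only at hst
  rw [← hst, ← hray s hs]
  exact ⟨_, rfl⟩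

theorem FanData.endpoints_eq (H : FanData c φ) : Endpoints (fan c φ) = range (tip c φ) := by
  ext q
  constructor
  · rintro ⟨hq, -, h2⟩
    by_cases hv : q = fanVertex
    · exact absurd (hv ▸ H.order_vertex) h2
    · obtain ⟨i, h3, h4, h5, -⟩ := H.exists_index hq hv
      rcases h4.lt_or_eq with h6 | h6
      · rw [h5] at h2
        exact absurd (FanData.order_inner h3 h6) h2
      · rw [h6] at h5
        exact ⟨i, h5.symm⟩
  · rintro ⟨i, rfl⟩
    refine ⟨H.tip_mem i, ⟨fun _ => rayPt (c i) '' uIcc (φ i) 0, ?_, ?_, ?_⟩, ?_⟩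
    · exact fun _ => FanData.leg_subset ⟨(H.pos i).le, le_rfl⟩ ⟨le_rfl, (H.pos i).le⟩
    · exact fun _ => ⟨_, isArc_ray _ (H.pos i).ne'⟩
    · intro m n hmn
      exact absurd (Subsingleton.elim m n) hmn
    · rintro ⟨A, hA, harc, hint⟩
      obtain ⟨b0, hb0⟩ := harc 0
      obtain ⟨b1, hb1⟩ := harc 1
      obtain ⟨δ0, hδ0, h0⟩ := H.arc_at_tip (hA 0) hb0
      obtain ⟨δ1, hδ1, h1⟩ := H.arc_at_tip (hA 1) hb1
      have hm : max δ0 δ1 < φ i := max_lt hδ0 hδ1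
      have h2 : rayPt (c i) (max δ0 δ1) ∈ A 0 ∩ A 1 :=
        ⟨h0 _ ⟨le_max_left _ _, hm.le⟩, h1 _ ⟨le_max_right _ _, hm.le⟩⟩
      rw [hint 0 1 (by decide)] at h2
      exact hm.ne (rayPt_injective _ h2)

theorem FanData.isSmoothFan (H : FanData c φ) : IsSmoothFan (fan c φ) := by
  obtain ⟨e, he⟩ := H.three
  have hv : fanVertex ∈ fan c φ := ⟨e 0, 0, ⟨le_rfl, (H.pos _).le⟩, (rayPt_zero _).symm⟩
  refine ⟨?_, ?_, ?_, ?_, hv, H.order_vertex⟩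
  · rintro _ ⟨i, t, ht, rfl⟩
    exact ⟨c i, H.mem i, t, ⟨ht.1, ht.2.trans (H.le_one i)⟩, rfl⟩
  · refine (isCompact_Icc (a := ((0, 0) : ℝ × ℝ)) (b := (1, 1))).of_isClosed_subset H.closed ?_
    rintro _ ⟨i, t, ht, rfl⟩
    have h1 := cantorSet_subset_unitInterval (H.mem i)
    have h2 := ht.2.trans (H.le_one i)
    exact ⟨⟨mul_nonneg ht.1 h1.1, ht.1⟩, ⟨mul_le_one₀ h2 h1.1 h1.2, h2⟩⟩
  · refine (StarConvex.isPathConnected (a := fanVertex) ?_ hv).isConnected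
    rintro _ ⟨i, t, ht, rfl⟩ a b ha hb hab
    refine ⟨i, b * t, ⟨mul_nonneg hb ht.1, ?_⟩, ?_⟩
    · exact (mul_le_of_le_one_left ht.1 (by linarith)).trans ht.2
    · ext <;> simp [rayPt, fanVertex, mul_assoc]
  · exact ⟨_, H.tip_mem (e 0), _, H.tip_mem (e 1), fun h =>
      absurd (he (H.tip_injective h)) (by decide)⟩

end

section

theorem OrderAtLeast.map {X Y : Set (ℝ × ℝ)} (h : X ≃ₜ Y) (x : X) {n : ℕ}
    (hx : OrderAtLeast X (x : ℝ × ℝ) n) : OrderAtLeast Y (h x : ℝ × ℝ) n := by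
  obtain ⟨A, hA, harc, hint⟩ := hx
  have hcoe : Function.Injective (fun x : X => (h x : ℝ × ℝ)) :=
    Subtype.val_injective.comp h.injective
  refine ⟨fun i => (fun x : X => (h x : ℝ × ℝ)) '' (Subtype.val ⁻¹' A i), ?_, ?_, ?_⟩
  · rintro i _ ⟨a, -, rfl⟩
    exact (h a).2
  · intro i
    obtain ⟨b, hb⟩ := harc i
    obtain ⟨γ, hγ, hinj, hr, h0, -⟩ := isArc_iff.1 hb
    have hγX : ∀ s, γ s ∈ X := fun s => hA i (hr ▸ ⟨s, rfl⟩)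
    refine ⟨_, isArc_iff.2 ⟨fun s => h ⟨γ s, hγX s⟩, ?_, ?_, ?_, ?_, rfl⟩⟩
    · exact continuous_subtype_val.comp (h.continuous.comp (hγ.subtype_mk _))
    · intro s t hst
      exact hinj (congrArg Subtype.val (hcoe hst))
    · ext q
      constructor
      · rintro ⟨s, rfl⟩
        exact ⟨⟨γ s, hγX s⟩, hr ▸ ⟨s, rfl⟩, rfl⟩
      · rintro ⟨a, ha, rfl⟩
        have ha' : (a : ℝ × ℝ) ∈ range γ := hr ▸ ha
        obtain ⟨s, hs⟩ := ha'
        exact ⟨s, by simp only [hs]⟩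
    · simp only [h0]
  · intro i j hij
    rw [← image_inter hcoe, ← preimage_inter, hint i j hij]
    ext q
    constructor
    · rintro ⟨a, ha, rfl⟩
      have : a = x := Subtype.ext ha
      rw [this]
      rfl
    · rintro rfl
      exact ⟨x, rfl, rfl⟩

theorem Endpoints.map {X Y : Set (ℝ × ℝ)} (h : X ≃ₜ Y) (x : X)
    (hx : (x : ℝ × ℝ) ∈ Endpoints X) : (h x : ℝ × ℝ) ∈ Endpoints Y := by
  refine ⟨(h x).2, hx.2.1.map h x, fun h2 => hx.2.2 ?_⟩
  have := h2.map h.symm (h x)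
  rwa [h.symm_apply_apply] at this

variable {I J : Type*} {c φ : I → ℝ} {d ψ : J → ℝ}

theorem FanData.isPreconnected_leg {i : I} {T : Set ℝ} (hT : IsPreconnected T)
    (hsub : T ⊆ Icc 0 (φ i)) :
    IsPreconnected {x : fan c φ | ∃ t ∈ T, (x : ℝ × ℝ) = rayPt (c i) t} := by
  rw [IsInducing.subtypeVal.isPreconnected_image.symm]
  have : (Subtype.val '' {x : fan c φ | ∃ t ∈ T, (x : ℝ × ℝ) = rayPt (c i) t}) =
      rayPt (c i) '' T := by
    ext q
    constructor
    · rintro ⟨x, ⟨t, ht, hx⟩, rfl⟩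
      exact ⟨t, ht, hx.symm⟩
    · rintro ⟨t, ht, rfl⟩
      exact ⟨⟨rayPt (c i) t, i, t, hsub ht, rfl⟩, ⟨t, ht, rfl⟩, rfl⟩
  rw [this]
  exact hT.image _ (continuous_rayPt _).continuousOn

/-- Slopes are equal for points in the image of a connected set that avoids the vertex. -/
theorem FanData.slope_eq_map (K : FanData d ψ) {X : Set (ℝ × ℝ)} (h : X ≃ₜ fan d ψ) {S : Set X}
    (hS : IsPreconnected S) (hv : ∀ x ∈ S, (h x : ℝ × ℝ) ≠ fanVertex) {a b : X}
    (ha : a ∈ S) (hb : b ∈ S) :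
    (h a : ℝ × ℝ).1 / (h a : ℝ × ℝ).2 = (h b : ℝ × ℝ).1 / (h b : ℝ × ℝ).2 := by
  refine K.slope_eq (S := (fun x : X => (h x : ℝ × ℝ)) '' S) (hS.image _ (by fun_prop)) ?_ ?_
    (mem_image_of_mem _ ha) (mem_image_of_mem _ hb)
  · rintro _ ⟨x, -, rfl⟩
    exact (h x).2
  · rintro ⟨x, hx, hxv⟩
    exact hv x hx hxv

theorem FanData.exists_map_tip (H : FanData c φ) (K : FanData d ψ) (h : fan c φ ≃ₜ fan d ψ)
    (i : I) : ∃ j, (h ⟨tip c φ i, H.tip_mem i⟩ : ℝ × ℝ) = tip d ψ j := by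
  have h1 : (h ⟨tip c φ i, H.tip_mem i⟩ : ℝ × ℝ) ∈ Endpoints (fan d ψ) :=
    Endpoints.map h _ (by rw [H.endpoints_eq]; exact ⟨i, rfl⟩)
  rw [K.endpoints_eq] at h1
  obtain ⟨j, hj⟩ := h1
  exact ⟨j, hj.symm⟩

/-- A homeomorphism of fans preserves the vertex: removing any other point leaves two of three
legs connected to each other, whereas removing the vertex separates all tips. -/
theorem FanData.map_vertex (H : FanData c φ) (K : FanData d ψ) (h : fan c φ ≃ₜ fan d ψ)
    {x : fan c φ} (hx : (h x : ℝ × ℝ) = fanVertex) : (x : ℝ × ℝ) = fanVertex := by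
  by_contra hne
  obtain ⟨i, -, -, -, hi⟩ := H.exists_index x.2 hne
  obtain ⟨e, he⟩ := H.three
  have h2 : ∃ a b, a ≠ b ∧ e a ≠ i ∧ e b ≠ i := by
    by_cases h0 : e 0 = i
    · exact ⟨1, 2, by decide, fun h => absurd (he (h.trans h0.symm)) (by decide),
        fun h => absurd (he (h.trans h0.symm)) (by decide)⟩
    · by_cases h1 : e 1 = i
      · exact ⟨0, 2, by decide, h0, fun h => absurd (he (h.trans h1.symm)) (by decide)⟩
      · exact ⟨0, 1, by decide, h0, h1⟩
  obtain ⟨a, b, hab, ha, hb⟩ := h2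
  let S : I → Set (fan c φ) := fun k => {x | ∃ t ∈ Icc 0 (φ k), (x : ℝ × ℝ) = rayPt (c k) t}
  have hS : ∀ k, IsPreconnected (S k) := fun k =>
    FanData.isPreconnected_leg isPreconnected_Icc Subset.rfl
  have hvS : ∀ k, (⟨fanVertex, H.isSmoothFan.vertex_mem⟩ : fan c φ) ∈ S k := fun k =>
    ⟨0, ⟨le_rfl, (H.pos k).le⟩, (rayPt_zero _).symm⟩
  have htS : ∀ k, (⟨tip c φ k, H.tip_mem k⟩ : fan c φ) ∈ S k := fun k =>
    ⟨φ k, ⟨(H.pos k).le, le_rfl⟩, rfl⟩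
  have hxS : ∀ k, k ≠ i → x ∉ S k := by
    rintro k hk ⟨t, -, ht⟩
    have ht0 : t ≠ 0 := by
      rintro rfl
      exact hne (by rw [ht, rayPt_zero])
    rw [ht, rayPt_slope _ ht0] at hi
    exact hk (H.inj hi)
  have hU := (hS (e a)).union _ (hvS (e a)) (hvS (e b)) (hS (e b))
  have heq := K.slope_eq_map h hU (by
    intro y hy hyv
    have hyx : y = x := h.injective (Subtype.ext (hyv.trans hx.symm))
    rw [hyx] at hy
    exact hy.elim (hxS _ ha) (hxS _ hb)) (Or.inl (htS (e a))) (Or.inr (htS (e b)))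
  obtain ⟨j, hj⟩ := H.exists_map_tip K h (e a)
  obtain ⟨k, hk⟩ := H.exists_map_tip K h (e b)
  rw [hj, hk, K.tip_slope, K.tip_slope] at heq
  have hjk := K.inj heq
  rw [← hjk, ← hj] at hk
  have h3 := congrArg Subtype.val (h.injective (Subtype.ext hk))
  exact hab (he (H.tip_injective h3)).symm

theorem FanData.map_ne_vertex (H : FanData c φ) (K : FanData d ψ) (h : fan c φ ≃ₜ fan d ψ)
    {x : fan c φ} (hx : (x : ℝ × ℝ) ≠ fanVertex) : (h x : ℝ × ℝ) ≠ fanVertex :=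
  fun hv => hx (H.map_vertex K h hv)

/-- A homeomorphism of fans maps legs to legs. -/
theorem FanData.map_slope (H : FanData c φ) (K : FanData d ψ) (h : fan c φ ≃ₜ fan d ψ)
    {x y : fan c φ} (hx : 0 < (x : ℝ × ℝ).2) (hy : 0 < (y : ℝ × ℝ).2)
    (hxy : (x : ℝ × ℝ).1 / (x : ℝ × ℝ).2 = (y : ℝ × ℝ).1 / (y : ℝ × ℝ).2) :
    (h x : ℝ × ℝ).1 / (h x : ℝ × ℝ).2 = (h y : ℝ × ℝ).1 / (h y : ℝ × ℝ).2 := by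
  obtain ⟨i, -, hxi, hxr, hxs⟩ := H.exists_index x.2 (ne_vertex_of_pos hx)
  obtain ⟨j, -, hyj, hyr, hys⟩ := H.exists_index y.2 (ne_vertex_of_pos hy)
  have hij : i = j := H.inj (by rw [← hxs, ← hys, hxy])
  subst hij
  refine K.slope_eq_map h (FanData.isPreconnected_leg (i := i) (T := Ioc 0 (φ i))
    isPreconnected_Ioc Ioc_subset_Icc_self) ?_ ⟨_, ⟨hx, hxi⟩, hxr⟩ ⟨_, ⟨hy, hyj⟩, hyr⟩
  rintro z ⟨t, ht, hz⟩
  exact H.map_ne_vertex K h (ne_vertex_of_pos (by rw [hz]; exact ht.1))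

theorem FanData.mem_fan_of_closure (H : FanData c φ) {q : ℝ × ℝ}
    (hq : q ∈ closure (range (tip c φ))) : q ∈ fan c φ :=
  H.closed.closure_subset_iff.2 (range_subset_iff.2 H.tip_mem) hq

theorem FanData.map_closure (H : FanData c φ) (K : FanData d ψ) (h : fan c φ ≃ₜ fan d ψ)
    (x : fan c φ) (hx : (x : ℝ × ℝ) ∈ closure (range (tip c φ))) :
    (h x : ℝ × ℝ) ∈ closure (range (tip d ψ)) := by
  have h1 : x ∈ closure (range fun i => (⟨tip c φ i, H.tip_mem i⟩ : fan c φ)) := by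
    rw [closure_subtype, ← range_comp]
    exact hx
  have hc : Continuous fun x : fan c φ => (h x : ℝ × ℝ) := by fun_prop
  have h2 := map_mem_closure (t := range (tip d ψ)) hc h1 ?_
  · exact h2
  rintro _ ⟨i, rfl⟩
  obtain ⟨j, hj⟩ := H.exists_map_tip K h i
  exact ⟨j, hj.symm⟩

theorem FanData.encard_trace_le (H : FanData c φ) (K : FanData d ψ) (h : fan c φ ≃ₜ fan d ψ)
    {i : I} {j : J} (hij : (h ⟨tip c φ i, H.tip_mem i⟩ : ℝ × ℝ) = tip d ψ j) :
    (trace c φ i).encard ≤ (trace d ψ j).encard := by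
  classical
  let g : ℝ × ℝ → ℝ × ℝ := fun q => if hq : q ∈ fan c φ then h ⟨q, hq⟩ else q
  have hmem : ∀ q ∈ trace c φ i, q ∈ fan c φ := fun q hq => H.mem_fan_of_closure hq.2.2.2
  have hg : ∀ q (hq : q ∈ fan c φ), g q = h ⟨q, hq⟩ := fun q hq => dif_pos hq
  refine encard_le_encard_of_injOn (f := g) ?_ ?_
  · rintro q hq
    rw [hg q (hmem q hq)]
    refine ⟨pos_of_mem_fan (h _).2 (H.map_ne_vertex K h (ne_vertex_of_pos hq.1)), ?_, ?_,
      H.map_closure K h _ hq.2.2.2⟩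
    · rw [H.map_slope K h (y := ⟨tip c φ i, H.tip_mem i⟩) hq.1 (H.pos i)
        (hq.2.1.trans (H.tip_slope i).symm), hij, K.tip_slope]
    · intro heq
      rw [← hij] at heq
      exact hq.2.2.1 (congrArg Subtype.val (h.injective (Subtype.ext heq)))
  · intro q hq r hr hqr
    rw [hg q (hmem q hq), hg r (hmem r hr)] at hqr
    exact congrArg Subtype.val (h.injective (Subtype.ext hqr))

/-- Corresponding tips of homeomorphic fans have traces of the same cardinality. -/
theorem FanData.exists_map_tip_trace (H : FanData c φ) (K : FanData d ψ)
    (h : fan c φ ≃ₜ fan d ψ) (i : I) :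
    ∃ j, (h ⟨tip c φ i, H.tip_mem i⟩ : ℝ × ℝ) = tip d ψ j ∧
      (trace c φ i).encard = (trace d ψ j).encard := by
  obtain ⟨j, hj⟩ := H.exists_map_tip K h i
  refine ⟨j, hj, le_antisymm (H.encard_trace_le K h hj) (K.encard_trace_le H h.symm ?_)⟩
  have : (⟨tip d ψ j, K.tip_mem j⟩ : fan d ψ) = h ⟨tip c φ i, H.tip_mem i⟩ := Subtype.ext hj.symm
  rw [this, h.symm_apply_apply]

/-- A criterion for rigidity. If the size of the trace singles out each leg in `D`, the tips in `D`
are fixed, and so is every limit of such tips. If moreover every leg contains a limit of this kind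
other than the vertex, every leg is mapped to itself, and hence its tip is fixed. -/
theorem FanData.endpointRigid (H : FanData c φ) (D : Set I)
    (h1 : ∀ i ∈ D, ∀ j, (trace c φ i).encard = (trace c φ j).encard → i = j)
    (h2 : ∀ i, ∃ q ∈ closure (tip c φ '' D), 0 < q.2 ∧ q.1 / q.2 = c i) :
    EndpointRigid (fan c φ) := by
  intro h x hx
  rw [H.endpoints_eq] at hx
  obtain ⟨i, hi⟩ := hx
  have hx' : x = ⟨tip c φ i, H.tip_mem i⟩ := Subtype.ext hi.symm
  subst hx'
  obtain ⟨q, hq, hq0, hqs⟩ := h2 i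
  have hqF : q ∈ fan c φ := H.mem_fan_of_closure (closure_mono (image_subset_range _ _) hq)
  have hfix : h ⟨q, hqF⟩ = ⟨q, hqF⟩ := by
    have hcl : IsClosed {x : fan c φ | h x = x} := isClosed_eq h.continuous continuous_id
    have hq' : (⟨q, hqF⟩ : fan c φ) ∈
        closure ((fun i => (⟨tip c φ i, H.tip_mem i⟩ : fan c φ)) '' D) := by
      rw [closure_subtype, image_image]
      exact hq
    refine hcl.closure_subset_iff.2 ?_ hq'
    rintro _ ⟨k, hk, rfl⟩
    obtain ⟨j, hj, hjt⟩ := H.exists_map_tip_trace H h k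
    rw [← h1 k hk j hjt] at hj
    exact Subtype.ext hj
  obtain ⟨j, hj⟩ := H.exists_map_tip H h i
  have hsl := H.map_slope H h (x := ⟨tip c φ i, H.tip_mem i⟩) (y := ⟨q, hqF⟩) (H.pos i) hq0
    ((H.tip_slope i).trans hqs.symm)
  rw [hfix, hj, H.tip_slope, hqs] at hsl
  rw [hj, H.inj hsl]

end

end

/-! ### Trees of copies of a seed -/

section

open Filter

theorem mem_closure_range_iff_exists_ultrafilter {X Y : Type*} [TopologicalSpace Y] {F : X → Y}
    {y : Y} : y ∈ closure (range F) ↔ ∃ U : Ultrafilter X, Tendsto F U (𝓝 y) := by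
  rw [← image_univ, mem_closure_iff_clusterPt, ← map_principal, principal_univ]
  exact mapClusterPt_iff_ultrafilter.trans (by simp)

/-- Vertices of the tree in which every vertex has children labelled by `ι × ℕ`. -/
inductive Node (ι : Type) : Type
  | root : Node ι
  | child (l : Node ι) (k : ι) (j : ℕ) : Node ι

namespace Node

variable {ι : Type}

instance : TopologicalSpace (Node ι) := ⊥

instance : DiscreteTopology (Node ι) := ⟨rfl⟩

/-- The labels on the path from a vertex to the root, which show that there are only countably
many vertices. -/
def toList : Node ι → List (ι × ℕ)
  | root => []
  | child l k j => (k, j) :: toList l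

theorem toList_injective : Function.Injective (toList (ι := ι)) := by
  intro l
  induction l with
  | root => intro m h; cases m <;> simp_all [toList]
  | child l k j ih =>
    intro m h
    cases m with
    | root => simp [toList] at h
    | child m k' j' =>
      simp only [toList, List.cons.injEq, Prod.mk.injEq] at h
      rw [h.1.1, h.1.2, ih h.2]

instance [Countable ι] : Countable (Node ι) := toList_injective.countable

instance [Nonempty ι] : Infinite (Node ι) :=
  Infinite.of_injective (fun j : ℕ => child root (Classical.arbitrary ι) j) fun i j h => by
    simpa using h

/-- The distance to the root. -/
def depth : Node ι → ℕ
  | root => 0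
  | child l _ _ => depth l + 1

variable [Countable ι] [Nonempty ι]

/-- An enumeration of the possible attaching places: the pair `(l, k)` stands for the
distinguished leg `d k` of the copy at `l`. -/
def pairNum : Node ι × ι ≃ ℕ := Classical.choice nonempty_equiv_of_countable

/-- An enumeration of the vertices. -/
def num : Node ι ≃ ℕ := Classical.choice nonempty_equiv_of_countable

/-- The base height of a vertex. The children `child l k j`, `j ∈ ℕ`, realize exactly `A n`
different base heights, where `n` is the number of the pair `(l, k)`, and each of them infinitely
often. The summand `n` makes the heights small for all but finitely many pairs. -/
def ht (A : ℕ → ℕ) : Node ι → ℝ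
  | root => 1 / 2
  | child l k j => ht A l / (pairNum (l, k) + 2 + (j % A (pairNum (l, k)) : ℕ))

theorem ht_pos (A : ℕ → ℕ) (l : Node ι) : 0 < ht A l := by
  induction l with
  | root => norm_num [ht]
  | child l k j ih => rw [ht]; positivity

theorem ht_child_lt (A : ℕ → ℕ) (l : Node ι) (k : ι) (j : ℕ) : ht A (child l k j) < ht A l := by
  have h := ht_pos A l
  rw [ht, div_lt_iff₀ (by positivity)]
  have h1 : (0:ℝ) ≤ pairNum (l, k) := by positivity
  have h2 : (0:ℝ) ≤ (j % A (pairNum (l, k)) : ℕ) := by positivity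
  nlinarith

theorem ht_le_half (A : ℕ → ℕ) (l : Node ι) : ht A l ≤ 1 / 2 := by
  induction l with
  | root => exact le_rfl
  | child l k j ih => exact (ht_child_lt A l k j).le.trans ih

end Node

open Node

section

variable {P B ι : Type} (pos : P → B → Bool) (ψ : P → ℝ) (d : ι → P)

open Classical in
/-- The code of the point with position `w` in the copy of `P` attached at the vertex `l`:
it records all ancestors of `l`, the point of the copy at each ancestor to which the next
one is attached, and `w`. -/
def code : Node ι → (B → Bool) → Node ι × Option B → Bool
  | root, w => fun p => if p.1 = root then p.2.elim true w else false
  | child l k j, w => fun p => if p.1 = child l k j then p.2.elim true w else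
      code l (pos (d k)) p

theorem code_self (l : Node ι) (w : B → Bool) (b : Option B) :
    code pos d l w (l, b) = b.elim true w := by
  cases l <;> simp [code]

theorem code_child_of_ne {l : Node ι} {k : ι} {j : ℕ} (w : B → Bool) {p : Node ι × Option B}
    (h : child l k j ≠ p.1) : code pos d (child l k j) w p = code pos d l (pos (d k)) p := by
  simp [code, h.symm]

theorem continuous_code (l : Node ι) : Continuous (code pos d l) := by
  refine continuous_pi fun ⟨m, b⟩ => ?_
  cases l with
  | root =>
    by_cases h : m = root
    · cases b <;> simp only [code, h, if_true, Option.elim] <;> fun_prop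
    · simp only [code, h, if_false]; fun_prop
  | child l k j =>
    by_cases h : m = child l k j
    · cases b <;> simp only [code, h, if_true, Option.elim] <;> fun_prop
    · simp only [code, h, if_false]; fun_prop

/-- The code of a point of the copy at `l` mentions only `l` and vertices of smaller depth. -/
theorem eq_or_depth_lt {l m : Node ι} {w : B → Bool} (h : code pos d l w (m, none) = true) :
    m = l ∨ m.depth < l.depth := by
  induction l generalizing w with
  | root => left; by_contra h'; simp [code, h'] at h
  | child l k j ih =>
    by_cases h' : m = child l k j
    · exact Or.inl h'
    · right
      rw [code_child_of_ne pos d w (Ne.symm h')] at h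
      rcases ih h with rfl | h
      · exact Nat.lt_succ_self _
      · exact h.trans (Nat.lt_succ_self _)

theorem code_inj {l m : Node ι} {w z : B → Bool} (h : code pos d l w = code pos d m z) :
    l = m ∧ w = z := by
  have hlm : l = m := by
    have h1 := eq_or_depth_lt pos d (l := m) (m := l) (w := z) (by rw [← h, code_self]; rfl)
    have h2 := eq_or_depth_lt pos d (l := l) (m := m) (w := w) (by rw [h, code_self]; rfl)
    rcases h1 with h1 | h1
    · exact h1
    · rcases h2 with h2 | h2
      · exact h2.symm
      · exact absurd h1 h2.asymm
  subst hlm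
  refine ⟨rfl, funext fun b => ?_⟩
  have := congrFun h (l, some b)
  rwa [code_self, code_self] at this

variable [TopologicalSpace P]

/-- The position and height functions of a family of legs, indexed by `P`, together with a
countable family of distinguished legs. The conditions `inducing` and `exists_ge` say that the tips
form a copy of `P` and that limits of tips lie on the legs. No tips accumulate on distinguished
legs below their own tips, whereas limits of distinguished tips occur on every leg. On each
remaining leg tips accumulate, below its tip, at no point or at infinitely many; hence the number
of these points is never a positive integer. -/
structure IsSeed : Prop where
  pos_inj : Function.Injective pos
  d_inj : Function.Injective d
  nonneg : ∀ x, 0 ≤ ψ x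
  le_one : ∀ x, ψ x ≤ 1
  exists_ge : ∀ v t, (v, t) ∈ closure (range fun x => (pos x, ψ x)) → ∃ x, pos x = v ∧ t ≤ ψ x
  d_unique : ∀ k t, (pos (d k), t) ∈ closure (range fun x => (pos x, ψ x)) → t = ψ (d k)
  inducing : IsInducing fun x => (pos x, ψ x)
  dense : ∀ x, ∃ t, (pos x, t) ∈ closure (range fun k => (pos (d k), ψ (d k)))
  empty_or_infinite : ∀ x ∉ range d,
    {t | (pos x, t) ∈ closure (range fun x => (pos x, ψ x)) ∧ t ≠ ψ x} = ∅ ∨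
    {t | (pos x, t) ∈ closure (range fun x => (pos x, ψ x)) ∧ t ≠ ψ x}.Infinite

variable [Countable ι] [Nonempty ι] (A : ℕ → ℕ)

/-- The height of the `(l, x)`-th leg. Heights within one copy vary less and less as the number
of the vertex grows, so that a sequence of different copies can converge to a single point. -/
def legHt (y : Node ι × P) : ℝ := ht A y.1 * (1 + ψ y.2 / (num y.1 + 2))

/-- The tip of the `(l, x)`-th leg as a pair of a code and a height. -/
def legTop (y : Node ι × P) : (Node ι × Option B → Bool) × ℝ :=
  (code pos d y.1 (pos y.2), legHt ψ A y)

variable {pos ψ d}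

theorem IsSeed.legHt_bounds (H : IsSeed pos ψ d) (y : Node ι × P) :
    ht A y.1 ≤ legHt ψ A y ∧ legHt ψ A y ≤ 3 / 2 * ht A y.1 := by
  have h0 := ht_pos A y.1
  have h1 := H.nonneg y.2
  have h2 := H.le_one y.2
  have h3 : (0:ℝ) ≤ num y.1 := by positivity
  have h4 : 0 ≤ ψ y.2 / (num y.1 + 2) := by positivity
  have h5 : ψ y.2 / (num y.1 + 2) ≤ 1 / 2 := by
    rw [div_le_div_iff₀ (by positivity) (by positivity)]; linarith
  unfold legHt
  constructor <;> nlinarith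

theorem IsSeed.legHt_pos (H : IsSeed pos ψ d) (y : Node ι × P) : 0 < legHt ψ A y :=
  (ht_pos A _).trans_le (H.legHt_bounds A y).1

theorem IsSeed.legHt_le_one (H : IsSeed pos ψ d) (y : Node ι × P) : legHt ψ A y ≤ 1 := by
  have := (H.legHt_bounds A y).2
  have := ht_le_half A y.1
  linarith

/-- Legs attached at pairwise different children of the same kind converge to the leg to which
these children are attached. -/
theorem IsSeed.tendsto_child (H : IsSeed pos ψ d) {L : Filter (Node ι × P)}
    (hL : Tendsto Prod.fst L cofinite) {l : Node ι} {k : ι} {σ : ℝ}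
    (h : ∀ᶠ y in L, ∃ j, y.1 = child l k j ∧ ht A y.1 = σ) :
    Tendsto (legTop pos ψ d A) L (𝓝 (code pos d l (pos (d k)), σ)) := by
  refine Tendsto.prodMk_nhds (tendsto_pi_nhds.2 fun p => ?_) ?_
  · refine tendsto_nhds_of_eventually_eq ?_
    have hne : ∀ᶠ y in L, y.1 ≠ p.1 := hL.eventually (eventually_cofinite_ne p.1)
    filter_upwards [h, hne] with y hj hy
    obtain ⟨j, hj, -⟩ := hj
    rw [hj] at hy ⊢
    exact code_child_of_ne pos d _ hy
  · have hnum : Tendsto (fun y : Node ι × P => (num y.1 : ℝ) + 2) L atTop :=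
      tendsto_atTop_add_const_right _ _
        (tendsto_natCast_atTop_atTop.comp
          ((Nat.cofinite_eq_atTop ▸ num.injective.tendsto_cofinite).comp hL))
    have h0 : Tendsto (fun y : Node ι × P => ψ y.2 / (num y.1 + 2)) L (𝓝 0) := by
      refine squeeze_zero (fun y => ?_) (fun y => ?_) hnum.inv_tendsto_atTop
      · have := H.nonneg y.2
        positivity
      · rw [div_eq_mul_inv]
        exact mul_le_of_le_one_left (by simp; positivity) (H.le_one y.2)
    have h1 : Tendsto (fun y : Node ι × P => σ * (1 + ψ y.2 / (num y.1 + 2))) L (𝓝 σ) := by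
      simpa using (h0.const_add 1).const_mul σ
    refine h1.congr' ?_
    filter_upwards [h] with y hj
    obtain ⟨j, -, hj⟩ := hj
    rw [legHt, hj]

/-- Limits of tops of legs away from height zero: either the legs are eventually attached at the
same vertex, or the limit comes from infinitely many children of the same kind. -/
theorem IsSeed.limit_cases (H : IsSeed pos ψ d) {U : Ultrafilter (Node ι × P)}
    {v : Node ι × Option B → Bool} {t : ℝ} (ht0 : 0 < t)
    (hU : Tendsto (legTop pos ψ d A) U (𝓝 (v, t))) :
    (∃ l w t0, (∀ᶠ y in (U : Filter (Node ι × P)), y.1 = l) ∧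
      Tendsto (fun y : Node ι × P => (pos y.2, ψ y.2)) U (𝓝 (w, t0)) ∧
      v = code pos d l w ∧ t = ht A l * (1 + t0 / (num l + 2))) ∨
    (∃ l k j, v = code pos d l (pos (d k)) ∧ t = ht A (child l k j)) := by
  have hU1 : Tendsto (fun y : Node ι × P => code pos d y.1 (pos y.2)) U (𝓝 v) :=
    (continuous_fst.tendsto _).comp hU
  have hU2 : Tendsto (legHt ψ A) (U : Filter (Node ι × P)) (𝓝 t) := (continuous_snd.tendsto _).comp hU
  by_cases hl : ∃ l, ∀ᶠ y in (U : Filter (Node ι × P)), y.1 = l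
  · obtain ⟨l, hl⟩ := hl
    left
    have hw : Tendsto (fun y : Node ι × P => pos y.2) U (𝓝 fun b => v (l, some b)) := by
      refine tendsto_pi_nhds.2 fun b => ?_
      refine (tendsto_pi_nhds.1 hU1 (l, some b)).congr' ?_
      filter_upwards [hl] with y hy
      rw [hy, code_self]
      rfl
    have h0 := ht_pos A l
    have hn : (0:ℝ) < num l + 2 := by positivity
    refine ⟨l, _, (t / ht A l - 1) * (num l + 2), hl, hw.prodMk_nhds ?_, ?_, ?_⟩
    · refine (((hU2.div_const (ht A l)).sub_const 1).mul_const ((num l : ℝ) + 2)).congr' ?_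
      filter_upwards [hl] with y hy
      rw [legHt, hy]
      field_simp
      ring
    · refine tendsto_nhds_unique hU1 ((((continuous_code pos d l).tendsto _).comp hw).congr' ?_)
      filter_upwards [hl] with y hy
      rw [hy]
      rfl
    · field_simp
      ring
  · right
    push Not at hl
    have hcof : Tendsto Prod.fst (U : Filter (Node ι × P)) cofinite := by
      refine le_cofinite_iff_eventually_ne.2 fun l => ?_
      exact hl l
    let g : Node ι × P → ℕ × ℕ := fun y => match y.1 with
      | root => (0, 0)
      | child l k j => (pairNum (l, k), j % A (pairNum (l, k)))
    obtain ⟨M, hM⟩ := exists_nat_gt (3 / 2 / t)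
    have hfin : (Iio M ×ˢ Iio M : Set (ℕ × ℕ)) ∈ U.map g := by
      have h1 : ∀ᶠ y in (U : Filter (Node ι × P)), t / 2 < legHt ψ A y := hU2.eventually_const_lt (by linarith)
      have h2 : ∀ᶠ y in (U : Filter (Node ι × P)), y.1 ≠ root := hcof.eventually (eventually_cofinite_ne root)
      have h3 : ∀ᶠ y in (U : Filter (Node ι × P)), g y ∈ (Iio M ×ˢ Iio M : Set (ℕ × ℕ)) := ?_
      · exact h3
      filter_upwards [h1, h2] with y hy hm
      obtain ⟨m, x⟩ := y
      cases m with
      | root => exact absurd rfl hm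
      | child l k j =>
        have h3 := (H.legHt_bounds A (child l k j, x)).2
        have h4 : t / 2 < 3 / 2 * ht A (child l k j) := hy.trans_le h3
        have h5 := ht_le_half A l
        rw [ht] at h4
        set a := pairNum (l, k)
        set r := j % A a
        have h6 : (0:ℝ) < (a : ℝ) + 2 + (r : ℕ) := by positivity
        have h7 : (a : ℝ) + 2 + (r : ℕ) < M := by
          refine lt_trans ?_ hM
          rw [lt_div_iff₀ ht0]
          rw [← mul_div_assoc, lt_div_iff₀ h6] at h4
          linarith
        have h8 : a + 2 + r < M := by exact_mod_cast h7
        show (a, r) ∈ _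
        simp only [mem_prod, mem_Iio]
        omega
    obtain ⟨⟨a, r⟩, -, har⟩ := Ultrafilter.eq_pure_of_finite_mem
      ((finite_Iio M).prod (finite_Iio M)) hfin
    have hev : ∀ᶠ y in (U : Filter (Node ι × P)), g y = (a, r) := by
      have : {(a, r)} ∈ U.map g := by rw [har]; exact mem_singleton _
      exact this
    obtain ⟨⟨l, k⟩, rfl⟩ := (pairNum (ι := ι)).surjective a
    have hev2 : ∀ᶠ y in (U : Filter (Node ι × P)), ∃ j, y.1 = child l k j ∧
        ht A y.1 = ht A l / (pairNum (l, k) + 2 + (r : ℕ)) := by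
      have h2 : ∀ᶠ y in (U : Filter (Node ι × P)), y.1 ≠ root := hcof.eventually (eventually_cofinite_ne root)
      filter_upwards [hev, h2] with y hy hm
      obtain ⟨m, x⟩ := y
      cases m with
      | root => exact absurd rfl hm
      | child l' k' j =>
        have hy' : (pairNum (l', k'), j % A (pairNum (l', k'))) = (pairNum (l, k), r) := hy
        rw [Prod.mk.injEq, pairNum.apply_eq_iff_eq, Prod.mk.injEq] at hy'
        obtain ⟨⟨rfl, rfl⟩, rfl⟩ := hy'
        exact ⟨j, rfl, rfl⟩
    obtain ⟨y, j, hj, hy⟩ := hev2.exists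
    have := tendsto_nhds_unique hU (H.tendsto_child A hcof hev2)
    rw [Prod.mk.injEq] at this
    refine ⟨l, k, j, this.1, ?_⟩
    rw [this.2, ← hy, hj]

/-- A limit of tips which is not the vertex of the fan comes either from a limit within a single
copy, or from the children attached at a distinguished leg. -/
theorem IsSeed.mem_closure_cases (H : IsSeed pos ψ d)
    {v : Node ι × Option B → Bool} {t : ℝ} (ht0 : 0 < t)
    (h : (v, t) ∈ closure (range (legTop pos ψ d A))) :
    (∃ l x t0, v = code pos d l (pos x) ∧ t = ht A l * (1 + t0 / (num l + 2)) ∧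
      (pos x, t0) ∈ closure (range fun x => (pos x, ψ x))) ∨
    (∃ l k j, v = code pos d l (pos (d k)) ∧ t = ht A (child l k j)) := by
  obtain ⟨U, hU⟩ := mem_closure_range_iff_exists_ultrafilter.1 h
  refine (H.limit_cases A ht0 hU).imp_left ?_
  rintro ⟨l, w, t0, -, h1, h2, h3⟩
  have h4 : (w, t0) ∈ closure (range fun x => (pos x, ψ x)) :=
    mem_closure_range_iff_exists_ultrafilter.2 ⟨U.map Prod.snd, h1⟩
  obtain ⟨x, rfl, -⟩ := H.exists_ge _ _ h4
  exact ⟨l, x, t0, h2, h3, h4⟩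

/-- The copies at the children `child l k j'`, with `j'` congruent to `j`, accumulate at the point
of base height `ht A (child l k j)` on the leg to which they are attached. -/
theorem IsSeed.child_mem_closure (H : IsSeed pos ψ d) (hA : ∀ n, 0 < A n) (l : Node ι) (k : ι)
    (j : ℕ) : (code pos d l (pos (d k)), ht A (child l k j)) ∈
      closure (range (legTop pos ψ d A)) := by
  have hinj : Function.Injective fun n : ℕ => child l k (j + n * A (pairNum (l, k))) := by
    intro m n h
    simpa [(hA _).ne'] using h
  have := H.tendsto_child A (L := map (fun n : ℕ => (child l k (j + n * A (pairNum (l, k))), d k))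
    cofinite) (l := l) (k := k) (σ := ht A (child l k j)) hinj.tendsto_cofinite ?_
  · exact mem_closure_of_tendsto this (Eventually.of_forall fun y => mem_range_self y)
  · rw [eventually_map]
    refine Eventually.of_forall fun n => ⟨_, rfl, ?_⟩
    simp [ht]

omit [TopologicalSpace P] in
theorem continuous_copy (l : Node ι) : Continuous fun q : (B → Bool) × ℝ =>
    (code pos d l q.1, ht A l * (1 + q.2 / (num l + 2))) := by
  have := continuous_code pos d l
  fun_prop

omit [TopologicalSpace P] in
theorem copy_mem_closure (l : Node ι) {S : Set P} {v : B → Bool} {t0 : ℝ}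
    (h : (v, t0) ∈ closure ((fun x => (pos x, ψ x)) '' S)) :
    (code pos d l v, ht A l * (1 + t0 / (num l + 2))) ∈
      closure (legTop pos ψ d A '' (Prod.mk l '' S)) := by
  refine map_mem_closure (f := fun q : (B → Bool) × ℝ =>
    (code pos d l q.1, ht A l * (1 + q.2 / (num l + 2))))
    (continuous_copy (pos := pos) (d := d) A l) h ?_
  rintro _ ⟨x, hx, rfl⟩
  exact ⟨(l, x), mem_image_of_mem _ hx, rfl⟩

/-- On the set of tips the topology is that of a disjoint union of copies of `P`: the tip of a leg
lies above all children attached to that leg, so these do not accumulate at it. -/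
theorem IsSeed.isInducing_legTop (H : IsSeed pos ψ d) :
    IsInducing (legTop pos ψ d A) := by
  have hcont : Continuous (legTop pos ψ d A) := by
    refine continuous_prod_of_discrete_left.2 fun l => ?_
    exact (continuous_copy (pos := pos) (d := d) A l).comp H.inducing.continuous
  refine isInducing_iff_nhds.2 fun y => le_antisymm (hcont.tendsto y).le_comap ?_
  refine le_iff_ultrafilter.2 fun U hU => ?_
  have hU' : Tendsto (legTop pos ψ d A) U (𝓝 (legTop pos ψ d A y)) := tendsto_iff_comap.2 hU
  obtain ⟨l, x⟩ := y
  rcases H.limit_cases A (H.legHt_pos A _) hU' with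
    ⟨m, w, t0, h1, h2, h3, h4⟩ | ⟨m, k, j, h1, h2⟩
  · obtain ⟨rfl, rfl⟩ := code_inj pos d h3
    have h5 : t0 = ψ x := by
      have := ht_pos A l
      have hn : (0:ℝ) < num l + 2 := by positivity
      simp only [legHt] at h4
      field_simp at h4
      linarith
    subst h5
    have h6 : Tendsto (fun y : Node ι × P => y.2) U (𝓝 x) := H.inducing.tendsto_nhds_iff.2 h2
    have h7 : Tendsto (fun y : Node ι × P => y.1) U (𝓝 l) := tendsto_nhds_of_eventually_eq h1
    exact h7.prodMk_nhds h6
  · obtain ⟨rfl, -⟩ := code_inj pos d h1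
    have := (H.legHt_bounds A (l, x)).1
    exact absurd h2 (((ht_child_lt A l k j).trans_le this).ne')

end

end

/-! ### Rigid fans from seeds -/

section

open Filter Node

section

variable {P B ι : Type} [Countable B] [Countable ι] [Nonempty ι]

/-- An injection of the countable product of two-point spaces into the ternary Cantor set. -/
def toCantor (v : Node ι × Option B → Bool) : ℝ :=
  (cantorSetHomeomorphNatToBool.symm fun n =>
    v ((Classical.choice (nonempty_equiv_of_countable (α := ℕ) (β := Node ι × Option B))) n) :
      cantorSet)

theorem toCantor_mem (v : Node ι × Option B → Bool) : toCantor v ∈ cantorSet :=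
  Subtype.coe_prop _

theorem continuous_toCantor : Continuous (toCantor (ι := ι) (B := B)) := by
  unfold toCantor
  fun_prop

theorem toCantor_injective : Function.Injective (toCantor (ι := ι) (B := B)) := by
  intro v w h
  have h1 := cantorSetHomeomorphNatToBool.symm.injective (Subtype.ext h)
  funext p
  obtain ⟨n, rfl⟩ := (Classical.choice
    (nonempty_equiv_of_countable (α := ℕ) (β := Node ι × Option B))).surjective p
  exact congrFun h1 n

/-- The point of the cone over the Cantor set with given direction and height. -/
def toPlane (q : (Node ι × Option B → Bool) × ℝ) : ℝ × ℝ := rayPt (toCantor q.1) q.2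

theorem continuous_toPlane : Continuous (toPlane (ι := ι) (B := B)) := by
  have := continuous_toCantor (ι := ι) (B := B)
  unfold toPlane rayPt
  fun_prop

theorem toPlane_inj {q r : (Node ι × Option B → Bool) × ℝ} (hq : q.2 ≠ 0)
    (h : toPlane q = toPlane r) : q = r := by
  have h2 : q.2 = r.2 := congrArg (fun z : ℝ × ℝ => z.2) h
  refine Prod.ext (toCantor_injective ?_) h2
  rw [← rayPt_slope (toCantor q.1) hq, ← rayPt_slope (toCantor r.1) (h2 ▸ hq)]
  exact congrArg (fun z : ℝ × ℝ => z.1 / z.2) h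

variable (pos : P → B → Bool) (ψ : P → ℝ) (d : ι → P) (A : ℕ → ℕ)

/-- The direction of the leg with the given index. -/
def dir (y : Node ι × P) : ℝ := toCantor (code pos d y.1 (pos y.2))

theorem tip_eq (y : Node ι × P) :
    tip (dir pos d) (legHt ψ A) y = toPlane (legTop pos ψ d A y) := rfl

variable [TopologicalSpace P] {pos ψ d}

theorem IsSeed.dir_injective (H : IsSeed pos ψ d) :
    Function.Injective (dir pos d : Node ι × P → ℝ) := by
  intro y z h
  obtain ⟨h1, h2⟩ := code_inj pos d (toCantor_injective h)
  exact Prod.ext h1 (H.pos_inj h2)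

omit [Countable B] in
theorem IsSeed.isCompact_closure (H : IsSeed pos ψ d) :
    IsCompact (closure (range (legTop pos ψ d A))) := by
  have h : IsCompact ((univ : Set (Node ι × Option B → Bool)) ×ˢ Icc (0:ℝ) 1) :=
    isCompact_univ.prod isCompact_Icc
  refine h.closure_of_subset ?_
  rintro _ ⟨y, rfl⟩
  exact ⟨mem_univ _, (H.legHt_pos A y).le, H.legHt_le_one A y⟩

omit [Countable B] in
theorem IsSeed.nonneg_of_mem_closure (H : IsSeed pos ψ d)
    {q : (Node ι × Option B → Bool) × ℝ} (hq : q ∈ closure (range (legTop pos ψ d A))) :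
    0 ≤ q.2 := by
  have h : IsClosed {q : (Node ι × Option B → Bool) × ℝ | 0 ≤ q.2} :=
    isClosed_le continuous_const continuous_snd
  refine h.closure_subset_iff.2 ?_ hq
  rintro _ ⟨y, rfl⟩
  exact (H.legHt_pos A y).le

omit [Countable B] in
/-- Limits of tips lie on the legs of the fan. This is the upper semicontinuity which makes the fan
closed. -/
theorem IsSeed.le_legHt_of_mem_closure (H : IsSeed pos ψ d)
    {v : Node ι × Option B → Bool} {t : ℝ} (ht0 : 0 < t)
    (h : (v, t) ∈ closure (range (legTop pos ψ d A))) :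
    ∃ y : Node ι × P, v = code pos d y.1 (pos y.2) ∧ t ≤ legHt ψ A y := by
  rcases H.mem_closure_cases A ht0 h with ⟨l, x, t0, h1, h2, h3⟩ | ⟨l, k, j, h1, h2⟩
  · obtain ⟨x', hx', hle⟩ := H.exists_ge _ _ h3
    refine ⟨(l, x'), by rw [h1, hx'], ?_⟩
    have := ht_pos A l
    rw [h2, legHt]
    gcongr
  · exact ⟨(l, d k), h1, h2 ▸ (ht_child_lt A l k j).le.trans (H.legHt_bounds A (l, d k)).1⟩

/-- The fan is the cone over the closure of its tips, and therefore compact. -/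
theorem IsSeed.fan_eq (H : IsSeed pos ψ d) : fan (dir pos d) (legHt ψ A) =
    (fun p : ((Node ι × Option B → Bool) × ℝ) × ℝ => toPlane (p.1.1, p.2 * p.1.2)) ''
      (closure (range (legTop pos ψ d A)) ×ˢ Icc 0 1) := by
  ext q
  constructor
  · rintro ⟨y, t, ht, rfl⟩
    have h0 := H.legHt_pos A y
    refine ⟨(legTop pos ψ d A y, t / legHt ψ A y),
      ⟨subset_closure (mem_range_self y), div_nonneg ht.1 h0.le, div_le_one_of_le₀ ht.2 h0.le⟩, ?_⟩
    simp only [legTop, toPlane, dir]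
    rw [div_mul_cancel₀ _ h0.ne']
  · rintro ⟨⟨⟨v, t⟩, r⟩, ⟨hv, hr⟩, rfl⟩
    have ht0 : 0 ≤ t := H.nonneg_of_mem_closure A hv
    rcases ht0.eq_or_lt with rfl | ht0
    · let y : Node ι × P := (root, d (Classical.arbitrary ι))
      refine ⟨y, 0, ⟨le_rfl, (H.legHt_pos A y).le⟩, ?_⟩
      simp [toPlane, rayPt]
    · obtain ⟨y, rfl, hy⟩ := H.le_legHt_of_mem_closure A ht0 hv
      refine ⟨y, r * t, ⟨mul_nonneg hr.1 ht0.le, ?_⟩, rfl⟩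
      exact (mul_le_of_le_one_left ht0.le hr.2).trans hy

theorem IsSeed.fanData (H : IsSeed pos ψ d) :
    FanData (dir pos d : Node ι × P → ℝ) (legHt ψ A) where
  inj := H.dir_injective
  mem y := toCantor_mem _
  pos := H.legHt_pos A
  le_one := H.legHt_le_one A
  closed := by
    rw [H.fan_eq A]
    refine IsCompact.isClosed (((H.isCompact_closure A).prod isCompact_Icc).image ?_)
    have := continuous_toPlane (ι := ι) (B := B)
    fun_prop
  three := by
    let e : Fin 3 ↪ Node ι := Fin.valEmbedding.trans (Infinite.natEmbedding (Node ι))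
    exact ⟨fun i => (e i, d (Classical.arbitrary ι)), fun i j h =>
      e.injective (congrArg Prod.fst h)⟩

theorem IsSeed.closure_tips (H : IsSeed pos ψ d) (S : Set (Node ι × P)) :
    closure (tip (dir pos d) (legHt ψ A) '' S) = toPlane '' closure (legTop pos ψ d A '' S) := by
  rw [image_closure_of_isCompact
    ((H.isCompact_closure A).of_isClosed_subset isClosed_closure
      (closure_mono (image_subset_range _ _))) continuous_toPlane.continuousOn, image_image]
  rfl

/-- The size of the trace of a leg, computed through the heights of its points. -/
theorem IsSeed.encard_trace (H : IsSeed pos ψ d) (y : Node ι × P) :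
    (trace (dir pos d) (legHt ψ A) y).encard =
      {t | 0 < t ∧ t ≠ legHt ψ A y ∧ (code pos d y.1 (pos y.2), t) ∈
        closure (range (legTop pos ψ d A))}.encard := by
  have : trace (dir pos d) (legHt ψ A) y = rayPt (dir pos d y) ''
      {t | 0 < t ∧ t ≠ legHt ψ A y ∧ (code pos d y.1 (pos y.2), t) ∈
        closure (range (legTop pos ψ d A))} := by
    ext q
    unfold trace
    rw [← image_univ, H.closure_tips A, image_univ]
    constructor
    · rintro ⟨h0, h1, h2, ⟨⟨v, t⟩, hvt, rfl⟩⟩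
      have ht0 : 0 < t := h0
      have hv : v = code pos d y.1 (pos y.2) :=
        toCantor_injective ((rayPt_slope (toCantor v) ht0.ne').symm.trans h1)
      subst hv
      refine ⟨t, ⟨ht0, ?_, hvt⟩, rfl⟩
      rintro rfl
      exact h2 rfl
    · rintro ⟨t, ⟨h0, h1, h2⟩, rfl⟩
      refine ⟨h0, rayPt_slope _ h0.ne', fun h => h1 (congrArg Prod.snd h), ⟨_, h2, rfl⟩⟩
  rw [this, (rayPt_injective _).encard_image]

/-- The trace of a distinguished leg consists of the base heights of the children attached to it. -/
theorem IsSeed.encard_trace_distinguished (H : IsSeed pos ψ d) (hA : ∀ n, 0 < A n) (l : Node ι)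
    (k : ι) : (trace (dir pos d) (legHt ψ A) (l, d k)).encard = A (pairNum (l, k)) := by
  rw [H.encard_trace A]
  have : {t | 0 < t ∧ t ≠ legHt ψ A (l, d k) ∧ (code pos d l (pos (d k)), t) ∈
      closure (range (legTop pos ψ d A))} =
      (fun i : ℕ => ht A l / (pairNum (l, k) + 2 + i)) '' (Finset.range (A (pairNum (l, k)))) := by
    ext t
    constructor
    · rintro ⟨h0, h1, h2⟩
      rcases H.mem_closure_cases A h0 h2 with ⟨l', x, t0, h3, h4, h5⟩ | ⟨l', k', j, h3, h4⟩
      · obtain ⟨rfl, h6⟩ := code_inj pos d h3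
        rw [← h6] at h5
        refine absurd ?_ h1
        rw [h4, H.d_unique _ _ h5, legHt]
      · obtain ⟨rfl, h6⟩ := code_inj pos d h3
        obtain rfl := H.d_inj (H.pos_inj h6)
        refine ⟨j % A (pairNum (l, k)), ?_, h4.symm⟩
        simpa using Nat.mod_lt _ (hA _)
    · rintro ⟨i, hi, rfl⟩
      have hi' : i < A (pairNum (l, k)) := by simpa using hi
      have h : ht A l / (pairNum (l, k) + 2 + i) = ht A (child l k i) := by
        rw [ht, Nat.mod_eq_of_lt hi']
      simp only [h]
      exact ⟨ht_pos A _, ((ht_child_lt A l k i).trans_le (H.legHt_bounds A (l, d k)).1).ne,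
        H.child_mem_closure A hA l k i⟩
  rw [show (l, d k).1 = l from rfl, show (l, d k).2 = d k from rfl, this,
    Function.Injective.encard_image, encard_coe_eq_coe_finsetCard, Finset.card_range]
  intro i j hij
  have := ht_pos A l
  have h1 : (pairNum (l, k) : ℝ) + 2 + i = pairNum (l, k) + 2 + j := by
    simp only at hij
    rw [div_eq_div_iff (by positivity) (by positivity)] at hij
    exact (mul_left_cancel₀ this.ne' hij).symm
  exact_mod_cast add_left_cancel h1

/-- Nothing is attached to a leg which is not distinguished, so its trace lies in a single copy. -/
theorem IsSeed.encard_trace_other (H : IsSeed pos ψ d) (l : Node ι)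
    {x : P} (hx : x ∉ range d) : (trace (dir pos d) (legHt ψ A) (l, x)).encard = 0 ∨
      (trace (dir pos d) (legHt ψ A) (l, x)).encard = ⊤ := by
  rw [H.encard_trace A]
  have h0 := ht_pos A l
  have hn : (0:ℝ) < num l + 2 := by positivity
  have : {t | 0 < t ∧ t ≠ legHt ψ A (l, x) ∧ (code pos d l (pos x), t) ∈
      closure (range (legTop pos ψ d A))} =
      (fun t0 => ht A l * (1 + t0 / (num l + 2))) ''
        {t | (pos x, t) ∈ closure (range fun x => (pos x, ψ x)) ∧ t ≠ ψ x} := by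
    ext t
    constructor
    · rintro ⟨ht0, h1, h2⟩
      rcases H.mem_closure_cases A ht0 h2 with ⟨l', x', t0, h3, h4, h5⟩ | ⟨l', k', j, h3, h4⟩
      · obtain ⟨rfl, h6⟩ := code_inj pos d h3
        rw [← h6] at h5
        refine ⟨t0, ⟨h5, ?_⟩, h4.symm⟩
        rintro rfl
        exact h1 h4
      · obtain ⟨rfl, h6⟩ := code_inj pos d h3
        exact absurd ⟨k', (H.pos_inj h6).symm⟩ hx
    · rintro ⟨t0, ⟨h1, h2⟩, rfl⟩
      have h3 : 0 ≤ t0 := by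
        have h : IsClosed {q : (B → Bool) × ℝ | 0 ≤ q.2} :=
          isClosed_le continuous_const continuous_snd
        refine h.closure_subset_iff.2 ?_ h1
        rintro _ ⟨y, rfl⟩
        exact H.nonneg y
      refine ⟨by positivity, ?_, ?_⟩
      · rw [legHt]
        intro h
        have := mul_left_cancel₀ h0.ne' h
        rw [add_right_inj, div_left_inj' hn.ne'] at this
        exact h2 this
      · rw [← image_univ] at h1
        exact closure_mono (image_subset_range _ _) (copy_mem_closure (d := d) A l h1)
  rw [show (l, x).1 = l from rfl, show (l, x).2 = x from rfl, this,
    Function.Injective.encard_image]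
  · rcases H.empty_or_infinite x hx with h | h
    · left
      rw [h, encard_empty]
    · right
      exact h.encard_eq
  · intro a b hab
    have := mul_left_cancel₀ h0.ne' hab
    rwa [add_right_inj, div_left_inj' hn.ne'] at this

theorem IsSeed.eq_of_encard_trace (H : IsSeed pos ψ d) (hA : ∀ n, 0 < A n) {n : ℕ}
    (hn : 0 < n) {y : Node ι × P} (h : (trace (dir pos d) (legHt ψ A) y).encard = n) :
    ∃ l k, y = (l, d k) ∧ A (pairNum (l, k)) = n := by
  obtain ⟨l, x⟩ := y
  by_cases hx : x ∈ range d
  · obtain ⟨k, rfl⟩ := hx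
    rw [H.encard_trace_distinguished A hA] at h
    exact ⟨l, k, rfl, by exact_mod_cast h⟩
  · rcases H.encard_trace_other A l hx with h' | h'
    · rw [h'] at h
      have : (0 : ℕ) = n := by exact_mod_cast h
      omega
    · rw [h'] at h
      exact absurd h (ENat.top_ne_natCast n)

theorem IsSeed.endpointRigid (H : IsSeed pos ψ d) (hA : ∀ n, 0 < A n)
    (hinj : Function.Injective A) :
    EndpointRigid (fan (dir pos d : Node ι × P → ℝ) (legHt ψ A)) := by
  refine (H.fanData A).endpointRigid (range fun p : Node ι × ι => (p.1, d p.2)) ?_ ?_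
  · rintro _ ⟨⟨l, k⟩, rfl⟩ z hz
    simp only at hz
    rw [H.encard_trace_distinguished A hA] at hz
    obtain ⟨l', k', rfl, h⟩ := H.eq_of_encard_trace A hA (hA _) hz.symm
    have := pairNum.injective (hinj h)
    rw [Prod.mk.injEq] at this
    rw [this.1, this.2]
  · rintro ⟨l, x⟩
    obtain ⟨t, hcl⟩ := H.dense x
    have h0 := ht_pos A l
    have ht0 : 0 ≤ t := by
      have h : IsClosed {q : (B → Bool) × ℝ | 0 ≤ q.2} :=
        isClosed_le continuous_const continuous_snd
      refine h.closure_subset_iff.2 ?_ hcl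
      rintro _ ⟨y, rfl⟩
      exact H.nonneg _
    rw [H.closure_tips A]
    have h1 : (pos x, t) ∈ closure ((fun x => (pos x, ψ x)) '' range d) := by
      rw [← range_comp]
      exact hcl
    refine ⟨_, mem_image_of_mem _ (closure_mono (image_mono ?_)
      (copy_mem_closure (d := d) A l h1)), ?_, ?_⟩
    · rintro _ ⟨_, ⟨k, rfl⟩, rfl⟩
      exact ⟨(l, k), rfl⟩
    · show 0 < ht A l * (1 + t / (num l + 2))
      positivity
    · refine rayPt_slope _ ?_
      positivity

theorem IsSeed.endpoints_homeomorph (H : IsSeed pos ψ d) :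
    Nonempty (Endpoints (fan (dir pos d : Node ι × P → ℝ) (legHt ψ A)) ≃ₜ (Node ι × P)) := by
  rw [(H.fanData A).endpoints_eq]
  have hind : IsInducing (tip (dir pos d : Node ι × P → ℝ) (legHt ψ A)) := by
    have hcont : Continuous (tip (dir pos d : Node ι × P → ℝ) (legHt ψ A)) :=
      continuous_toPlane.comp (H.isInducing_legTop A).continuous
    refine isInducing_iff_nhds.2 fun y => le_antisymm (hcont.tendsto y).le_comap ?_
    refine le_iff_ultrafilter.2 fun U hU => ?_
    have hU' : Tendsto (fun z => toPlane (legTop pos ψ d A z)) U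
      (𝓝 (toPlane (legTop pos ψ d A y))) := tendsto_iff_comap.2 hU
    have hmem : closure (range (legTop pos ψ d A)) ∈ U.map (legTop pos ψ d A) :=
      Ultrafilter.mem_map.2 (univ_mem' fun z => subset_closure (mem_range_self z))
    obtain ⟨q, -, hq⟩ := (H.isCompact_closure A).ultrafilter_le_nhds' _ hmem
    have hq' : Tendsto (legTop pos ψ d A) U (𝓝 q) := hq
    have h1 := tendsto_nhds_unique hU' ((continuous_toPlane.tendsto q).comp hq')
    rw [← toPlane_inj (H.legHt_pos A y).ne' h1] at hq'
    have h2 : Tendsto id U (𝓝 y) := (H.isInducing_legTop A).tendsto_nhds_iff.2 hq'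
    exact tendsto_id'.1 h2
  exact ⟨((IsEmbedding.mk hind (H.fanData A).tip_injective).toHomeomorph).symm⟩

/-- Every seed gives rise to continuum many rigid fans, which are distinguished by the set of
finite cardinalities of traces. -/
theorem IsSeed.exists_family (H : IsSeed pos ψ d) : ∃ F : Set (Set (ℝ × ℝ)),
    Cardinal.mk ↥F = Cardinal.continuum ∧ PairwiseNonHomeomorphic F ∧
    ∀ X ∈ F, IsSmoothFan X ∧ EndpointRigid X ∧ Nonempty (Endpoints X ≃ₜ (Node ι × P)) := by
  -- the `n`-th value is `2 * n + 1` or `2 * n + 2`, so that the set of values determines `f`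
  let A : (ℕ → Bool) → ℕ → ℕ := fun f n => 2 * n + 1 + (f n).toNat
  have hA : ∀ f n, 0 < A f n := fun f n => by simp only [A]; omega
  have key : ∀ f g m n, A f m = A g n → m = n ∧ f m = g n := by
    intro f g m n h
    simp only [A] at h
    have h1 : (f m).toNat ≤ 1 := Bool.toNat_le _
    have h2 : (g n).toNat ≤ 1 := Bool.toNat_le _
    refine ⟨by omega, ?_⟩
    have h3 : (f m).toNat = (g n).toNat := by omega
    revert h3
    cases f m <;> cases g n <;> simp
  have hinj : ∀ f, Function.Injective (A f) := fun f m n h => (key f f m n h).1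
  let X : (ℕ → Bool) → Set (ℝ × ℝ) := fun f =>
    fan (dir pos d : Node ι × P → ℝ) (legHt ψ (A f))
  have hX : ∀ f g, Nonempty (X f ≃ₜ X g) → f = g := by
    rintro f g ⟨h⟩
    funext n
    obtain ⟨⟨l, k⟩, rfl⟩ := (pairNum (ι := ι)).surjective n
    obtain ⟨z, -, hz⟩ := (H.fanData (A f)).exists_map_tip_trace (H.fanData (A g)) h (l, d k)
    rw [H.encard_trace_distinguished (A f) (hA f)] at hz
    -- the value `A f n` occurs among the values of `A g`, necessarily at `n`
    obtain ⟨l', k', -, h'⟩ := H.eq_of_encard_trace (A g) (hA g) (hA f _) hz.symm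
    obtain ⟨h1, h2⟩ := key _ _ _ _ h'
    rw [← h2, h1]
  have hXinj : Function.Injective X := fun f g h => hX f g ⟨Homeomorph.setCongr h⟩
  refine ⟨range X, ?_, ?_, ?_⟩
  · rw [Cardinal.mk_range_eq X hXinj]
    simp
  · rintro _ ⟨f, rfl⟩ _ ⟨g, rfl⟩ hne
    by_contra hc
    rw [not_isEmpty_iff] at hc
    exact hne (congrArg X (hX f g hc))
  · rintro _ ⟨f, rfl⟩
    exact ⟨(H.fanData (A f)).isSmoothFan, H.endpointRigid (A f) (hA f) (hinj f),
      H.endpoints_homeomorph (A f)⟩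

end

end

/-! ### The three seeds -/

section

open Filter

/-- Legs of equal height over a compact set form a seed. The common value `0` is harmless, as the
height of a leg of the fan is obtained by scaling `1 + ψ x / (num l + 2)`. -/
theorem isSeed_of_compact {P B ι : Type} [TopologicalSpace P] [CompactSpace P]
    {pos : P → B → Bool} {d : ι → P} (hpos : Continuous pos) (hinj : Function.Injective pos)
    (hd : Function.Injective d) (hdense : DenseRange d) : IsSeed pos (fun _ => 0) d := by
  have hcont : Continuous fun x => (pos x, (0:ℝ)) := by fun_prop
  have hcl : closure (range fun x => (pos x, (0:ℝ))) = range fun x => (pos x, (0:ℝ)) :=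
    (isCompact_range hcont).isClosed.closure_eq
  have h0 : ∀ {v t}, (v, t) ∈ closure (range fun x => (pos x, (0:ℝ))) →
      (∃ x, pos x = v) ∧ t = 0 := by
    intro v t h
    rw [hcl] at h
    obtain ⟨x, hx⟩ := h
    rw [Prod.mk.injEq] at hx
    exact ⟨⟨x, hx.1⟩, hx.2.symm⟩
  refine ⟨hinj, hd, fun _ => le_rfl, fun _ => zero_le_one, fun v t h => ?_, fun k t h => (h0 h).2,
    ?_, fun x => ⟨0, ?_⟩, fun x _ => Or.inl ?_⟩
  · obtain ⟨⟨x, hx⟩, ht⟩ := h0 h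
    exact ⟨x, hx, ht.le⟩
  · exact (hcont.isClosedEmbedding fun x y h => hinj (congrArg Prod.fst h)).isInducing
  · have := map_mem_closure hcont (hdense x) (t := range fun k => (pos (d k), (0:ℝ))) ?_
    · exact this
    · rintro _ ⟨k, rfl⟩
      exact ⟨k, rfl⟩
  · ext t
    simp only [mem_ofPred_eq, mem_empty_iff_false, iff_false, not_and, not_not]
    exact fun h => (h0 h).2

namespace Baire

/-- A strictly positive weight with total mass `1`. -/
def wt (n : ℕ) : ℝ := 1 / 2 / 2 ^ n

theorem hasSum_wt : HasSum wt 1 := hasSum_geometric_two' 1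

theorem wt_pos (n : ℕ) : 0 < wt n := by unfold wt; positivity

/-- Every value `1 / (2 + i)` is attained infinitely often, and the value `1` only at `0`. -/
def val : ℕ → ℝ
  | 0 => 1
  | j + 1 => 1 / (2 + (Nat.unpair j).1)

theorem val_nonneg (n : ℕ) : 0 ≤ val n := by
  cases n <;> simp only [val] <;> positivity

theorem val_succ_le (j : ℕ) : val (j + 1) ≤ 1 / 2 := by
  simp only [val]
  gcongr
  simp

theorem val_le_one (n : ℕ) : val n ≤ 1 := by
  cases n with
  | zero => exact le_rfl
  | succ j => exact (val_succ_le j).trans (by norm_num)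

/-- The graph of `x`, with the value `0` omitted. -/
def pos (x : ℕ → ℕ) (p : ℕ × ℕ) : Bool := decide (x p.1 = p.2 + 1)

/-- The height of the leg over `x`. It drops when a coordinate is changed from `0` to a nonzero
value. -/
def hgt (x : ℕ → ℕ) : ℝ := ∑' n, wt n * val (x n)

/-- The sequences with positive terms that are eventually equal to `1`; these index the
distinguished legs. -/
def base (f : ℕ →₀ ℕ) (n : ℕ) : ℕ := f n + 1

theorem summable_wt_mul {ρ : ℕ → ℝ} (h0 : ∀ n, 0 ≤ ρ n) (h1 : ∀ n, ρ n ≤ 1) :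
    Summable fun n => wt n * ρ n :=
  Summable.of_nonneg_of_le (fun n => mul_nonneg (wt_pos n).le (h0 n))
    (fun n => mul_le_of_le_one_right (wt_pos n).le (h1 n)) hasSum_wt.summable

theorem summable_hgt (x : ℕ → ℕ) : Summable fun n => wt n * val (x n) :=
  summable_wt_mul (fun _ => val_nonneg _) fun _ => val_le_one _

theorem hgt_nonneg (x : ℕ → ℕ) : 0 ≤ hgt x :=
  tsum_nonneg fun n => mul_nonneg (wt_pos n).le (val_nonneg _)

theorem hgt_le_one (x : ℕ → ℕ) : hgt x ≤ 1 := by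
  rw [← hasSum_wt.tsum_eq]
  exact (summable_hgt x).tsum_le_tsum
    (fun n => mul_le_of_le_one_right (wt_pos n).le (val_le_one _)) hasSum_wt.summable

theorem norm_le (x : ℕ → ℕ) (n : ℕ) : ‖wt n * val (x n)‖ ≤ wt n := by
  rw [Real.norm_of_nonneg (mul_nonneg (wt_pos n).le (val_nonneg _))]
  exact mul_le_of_le_one_right (wt_pos n).le (val_le_one _)

theorem pos_injective : Function.Injective pos := by
  have key : ∀ {x y : ℕ → ℕ}, pos x = pos y → ∀ n, x n ≠ 0 → x n = y n := by
    intro x y h n hn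
    obtain ⟨j, hj⟩ := Nat.exists_eq_succ_of_ne_zero hn
    have h1 := congrFun h (n, j)
    simp only [pos, hj, Nat.succ_eq_add_one, decide_true] at h1
    rw [hj, of_decide_eq_true h1.symm]
  intro x y h
  funext n
  by_cases hx : x n = 0
  · by_cases hy : y n = 0
    · rw [hx, hy]
    · exact (key h.symm n hy).symm
  · exact key h n hx

/-- Limits of the positions and heights along an ultrafilter: each term of the series for the
height converges, and it can only jump down, at coordinates where the limit vanishes. -/
theorem exists_limit {U : Ultrafilter (ℕ → ℕ)} {v : ℕ × ℕ → Bool} {t : ℝ}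
    (h : Tendsto (fun x => (pos x, hgt x)) U (𝓝 (v, t))) :
    ∃ x : ℕ → ℕ, ∃ ρ : ℕ → ℝ, pos x = v ∧ (∀ n, 0 ≤ ρ n) ∧ (∀ n, ρ n ≤ val (x n)) ∧
      (∀ n, Tendsto (fun y : ℕ → ℕ => val (y n)) U (𝓝 (ρ n))) ∧
      (∀ n, x n ≠ 0 → ρ n = val (x n) ∧ ∀ᶠ y in (U : Filter (ℕ → ℕ)), y n = x n) ∧
      t = ∑' n, wt n * ρ n := by
  have h1 : Tendsto pos U (𝓝 v) := (continuous_fst.tendsto _).comp h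
  have h2 : Tendsto hgt U (𝓝 t) := (continuous_snd.tendsto _).comp h
  have h3 : ∀ n j, ∀ᶠ y in (U : Filter (ℕ → ℕ)), pos y (n, j) = v (n, j) := by
    intro n j
    have := tendsto_pi_nhds.1 h1 (n, j)
    rw [nhds_discrete, tendsto_pure] at this
    exact this
  have step : ∀ n, ∃ m : ℕ, ∃ r : ℝ, (∀ j, v (n, j) = decide (m = j + 1)) ∧ 0 ≤ r ∧ r ≤ val m ∧
      Tendsto (fun y : ℕ → ℕ => val (y n)) U (𝓝 r) ∧
      (m ≠ 0 → r = val m ∧ ∀ᶠ y in (U : Filter (ℕ → ℕ)), y n = m) := by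
    intro n
    by_cases hj : ∃ j, v (n, j) = true
    · obtain ⟨j, hj⟩ := hj
      have hev : ∀ᶠ y in (U : Filter (ℕ → ℕ)), y n = j + 1 := by
        filter_upwards [h3 n j] with y hy
        rw [hj] at hy
        exact of_decide_eq_true hy
      refine ⟨j + 1, val (j + 1), fun i => ?_, val_nonneg _, le_rfl, ?_, fun _ => ⟨rfl, hev⟩⟩
      · obtain ⟨y, hy1, hy2⟩ := (hev.and (h3 n i)).exists
        rw [← hy2, ← hy1]
        rfl
      · refine tendsto_nhds_of_eventually_eq ?_
        filter_upwards [hev] with y hy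
        rw [hy]
    · push Not at hj
      have hmem : Icc (0:ℝ) 1 ∈ U.map fun y : ℕ → ℕ => val (y n) :=
        Ultrafilter.mem_map.2 (univ_mem' fun y => ⟨val_nonneg _, val_le_one _⟩)
      obtain ⟨r, hr, hU⟩ := isCompact_Icc.ultrafilter_le_nhds' _ hmem
      refine ⟨0, r, fun j => ?_, hr.1, hr.2, hU, fun h => absurd rfl h⟩
      rw [Bool.eq_false_iff.2 (hj j)]
      simp
  choose x ρ hv hρ0 hρ1 hρ hx using step
  refine ⟨x, ρ, funext fun p => (hv p.1 p.2).symm, hρ0, hρ1, hρ, hx, ?_⟩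
  refine tendsto_nhds_unique h2 ?_
  exact tendsto_tsum_of_dominated_convergence hasSum_wt.summable
    (fun n => (hρ n).const_mul (wt n)) (Eventually.of_forall fun y n => norm_le y n)

/-- If `x` has no vanishing coordinate, convergence of positions to `pos x` is convergence of each
coordinate, and hence the heights converge as well. -/
theorem eq_hgt_of_ne_zero {x : ℕ → ℕ} (hx : ∀ n, x n ≠ 0) {t : ℝ}
    (h : (pos x, t) ∈ closure (range fun x => (pos x, hgt x))) : t = hgt x := by
  obtain ⟨U, hU⟩ := mem_closure_range_iff_exists_ultrafilter.1 h
  obtain ⟨y, ρ, h1, -, -, -, h2, rfl⟩ := exists_limit hU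
  obtain rfl := pos_injective h1
  unfold hgt
  congr 1
  funext n
  rw [(h2 n (hx n)).1]

theorem continuous_pos_hgt : Continuous fun x => (pos x, hgt x) := by
  refine Continuous.prodMk (continuous_pi fun p => ?_) ?_
  · exact (continuous_of_discreteTopology (f := fun m : ℕ => decide (m = p.2 + 1))).comp
      (continuous_apply p.1)
  · refine continuous_tsum (u := wt) (fun n => ?_) hasSum_wt.summable fun n x => norm_le x n
    exact continuous_const.mul
      ((continuous_of_discreteTopology (f := val)).comp (continuous_apply n))

/-- Positions alone do not control a coordinate tending to infinity, as its position tends to that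
of `0`; but then the limit of the heights is smaller than the height of the limit. -/
theorem isInducing_pos_hgt : IsInducing fun x => (pos x, hgt x) := by
  refine isInducing_iff_nhds.2 fun x => le_antisymm (continuous_pos_hgt.tendsto x).le_comap ?_
  refine le_iff_ultrafilter.2 fun U hU => ?_
  obtain ⟨y, ρ, h1, h0, h2, h3, h4, h5⟩ := exists_limit (tendsto_iff_comap.2 hU)
  obtain rfl := pos_injective h1
  have heq : ∀ n, ρ n = val (y n) := by
    intro n
    by_contra hne
    refine absurd h5 (ne_of_gt ?_)
    refine Summable.tsum_lt_tsum (i := n)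
      (fun m => mul_le_mul_of_nonneg_left (h2 m) (wt_pos m).le)
      (mul_lt_mul_of_pos_left (lt_of_le_of_ne (h2 n) hne) (wt_pos n))
      (summable_wt_mul h0 fun m => (h2 m).trans (val_le_one _)) (summable_hgt y)
  have : Tendsto id (U : Filter (ℕ → ℕ)) (𝓝 y) := by
    refine tendsto_pi_nhds.2 fun n => tendsto_nhds_of_eventually_eq ?_
    by_cases hn : y n = 0
    · have h6 := h3 n
      rw [heq n, hn] at h6
      filter_upwards [h6.eventually_const_lt (u := 1 / 2) (by norm_num [val])] with z hz
      by_contra h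
      have h : z n ≠ 0 := fun h' => h (by rw [id, h', hn])
      obtain ⟨j, hj⟩ := Nat.exists_eq_succ_of_ne_zero h
      rw [hj] at hz
      exact absurd (val_succ_le j) (not_le.2 hz)
    · exact (h4 n hn).2
  exact tendsto_id'.1 this

theorem hgt_update (x : ℕ → ℕ) (n m : ℕ) :
    hgt (Function.update x n m) = wt n * val m - wt n * val (x n) + hgt x := by
  refine HasSum.tsum_eq ?_
  have h : (fun k => wt k * val (Function.update x n m k)) =
      Function.update (fun k => wt k * val (x k)) n (wt n * val m) := by
    funext k
    by_cases hk : k = n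
    · subst hk; simp
    · simp [hk]
  rw [h]
  exact (summable_hgt x).hasSum.update n (wt n * val m)

/-- The Baire space is the index set of a seed, with the positions compact and the heights upper
semicontinuous, as for a Lelek function. -/
theorem isSeed : IsSeed pos hgt base where
  pos_inj := pos_injective
  d_inj f g h := Finsupp.ext fun n => Nat.succ_injective (congrFun h n)
  nonneg := hgt_nonneg
  le_one := hgt_le_one
  exists_ge v t h := by
    obtain ⟨U, hU⟩ := mem_closure_range_iff_exists_ultrafilter.1 h
    obtain ⟨y, ρ, h1, h0, h2, -, -, rfl⟩ := exists_limit hU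
    exact ⟨y, h1, Summable.tsum_le_tsum
      (fun m => mul_le_mul_of_nonneg_left (h2 m) (wt_pos m).le)
      (summable_wt_mul h0 fun m => (h2 m).trans (val_le_one _)) (summable_hgt y)⟩
  d_unique k t h := eq_hgt_of_ne_zero (fun n => Nat.succ_ne_zero _) h
  inducing := isInducing_pos_hgt
  dense x := by
    let f : ℕ → ℕ →₀ ℕ := fun N => Finsupp.onFinset (Finset.range N)
      (fun n => if n < N then (if x n = 0 then N else x n - 1) else 0) (by
        intro n hn
        rw [Finset.mem_range]
        by_contra h
        simp [h] at hn)
    have hf : Tendsto (fun N => pos (base (f N))) atTop (𝓝 (pos x)) := by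
      refine tendsto_pi_nhds.2 fun ⟨n, j⟩ => tendsto_nhds_of_eventually_eq ?_
      filter_upwards [eventually_gt_atTop n, eventually_gt_atTop j] with N hn hj
      simp only [pos, base, f, Finsupp.onFinset_apply, if_pos hn, decide_eq_decide]
      split_ifs with h <;> omega
    have hmem : Icc (0:ℝ) 1 ∈ (hyperfilter ℕ).map fun N => hgt (base (f N)) :=
      Ultrafilter.mem_map.2 (univ_mem' fun y => ⟨hgt_nonneg _, hgt_le_one _⟩)
    obtain ⟨t, -, ht⟩ := isCompact_Icc.ultrafilter_le_nhds' _ hmem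
    have ht' : Tendsto (fun N => hgt (base (f N))) (hyperfilter ℕ) (𝓝 t) := ht
    exact ⟨t, mem_closure_of_tendsto ((hf.mono_left Nat.hyperfilter_le_atTop).prodMk_nhds ht')
      (Eventually.of_forall fun N => mem_range_self (f N))⟩
  empty_or_infinite x _ := by
    by_cases hx : ∀ n, x n ≠ 0
    · left
      ext t
      simp only [mem_ofPred_eq, mem_empty_iff_false, iff_false, not_and, not_not]
      exact eq_hgt_of_ne_zero hx
    · right
      push Not at hx
      obtain ⟨n, hn⟩ := hx
      have hw := wt_pos n
      -- replacing the vanishing coordinate by ever larger values of weight `1 / (2 + i)`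
      let g : ℕ → ℝ := fun i => wt n * (1 / (2 + (i:ℝ))) - wt n * 1 + hgt x
      have hg : Function.Injective g := by
        intro i j hij
        simp only [g, add_left_inj, sub_left_inj] at hij
        have h1 := mul_left_cancel₀ hw.ne' hij
        rw [div_eq_div_iff (by positivity) (by positivity)] at h1
        have h2 : (i : ℝ) = j := by linarith
        exact_mod_cast h2
      refine (infinite_range_of_injective hg).mono ?_
      rintro _ ⟨i, rfl⟩
      constructor
      · have hpos : Tendsto (fun a => pos (Function.update x n (Nat.pair i a + 1))) atTop
            (𝓝 (pos x)) := by
          refine tendsto_pi_nhds.2 fun ⟨m, j⟩ => tendsto_nhds_of_eventually_eq ?_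
          filter_upwards [eventually_gt_atTop j] with a ha
          by_cases hm : m = n
          · subst hm
            have := Nat.right_le_pair i a
            simp only [pos, Function.update_self, hn, decide_eq_decide]
            omega
          · simp [pos, hm]
        have hh : ∀ a, hgt (Function.update x n (Nat.pair i a + 1)) = g i := by
          intro a
          rw [hgt_update, hn]
          simp [val, g]
        refine mem_closure_of_tendsto (hpos.prodMk_nhds tendsto_const_nhds)
          (Eventually.of_forall fun a => ⟨Function.update x n (Nat.pair i a + 1), ?_⟩)
        simp only [hh]
      · refine ne_of_lt ?_
        have h1 : 1 / (2 + (i:ℝ)) < 1 := by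
          rw [div_lt_one (by positivity)]
          have : (0:ℝ) ≤ i := by positivity
          linarith
        have := mul_lt_mul_of_pos_left h1 hw
        simp only [g]
        linarith

end Baire

/-- Prepending a first term. -/
def consHomeomorph : ℕ × (ℕ → ℕ) ≃ₜ (ℕ → ℕ) where
  toFun p n := Nat.casesOn n p.1 p.2
  invFun x := (x 0, fun n => x (n + 1))
  left_inv _ := rfl
  right_inv x := by
    funext n
    cases n <;> rfl
  continuous_toFun := by
    refine continuous_pi fun n => ?_
    cases n with
    | zero => exact continuous_fst
    | succ n => exact (continuous_apply n).comp continuous_snd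
  continuous_invFun := by fun_prop

end

/-- There is a family of cardinality `𝔠` of pairwise non-homeomorphic
endpoint rigid smooth fans; moreover such a family exists with all endpoint sets
homeomorphic to `ℕ`, one with all endpoint sets homeomorphic to the irrationals, and one
with all endpoint sets homeomorphic to (Cantor set) `× ℕ`. -/
theorem continuum_many_endpoint_rigid_fans :
    (∃ F : Set (Set (ℝ × ℝ)), Cardinal.mk ↥F = Cardinal.continuum ∧
      PairwiseNonHomeomorphic F ∧
      ∀ X ∈ F, IsSmoothFan X ∧ EndpointRigid X ∧
        Nonempty (↥(Endpoints X) ≃ₜ ℕ)) ∧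
    (∃ F : Set (Set (ℝ × ℝ)), Cardinal.mk ↥F = Cardinal.continuum ∧
      PairwiseNonHomeomorphic F ∧
      ∀ X ∈ F, IsSmoothFan X ∧ EndpointRigid X ∧
        Nonempty (↥(Endpoints X) ≃ₜ {x : ℝ // Irrational x})) ∧
    (∃ F : Set (Set (ℝ × ℝ)), Cardinal.mk ↥F = Cardinal.continuum ∧
      PairwiseNonHomeomorphic F ∧
      ∀ X ∈ F, IsSmoothFan X ∧ EndpointRigid X ∧
        Nonempty (↥(Endpoints X) ≃ₜ (↥cantorSet × ℕ))) := by
  refine ⟨?_, ?_, ?_⟩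
  · have H : IsSeed (fun (_ : Unit) (e : Empty) => e.elim) (fun _ => 0) (id : Unit → Unit) :=
      isSeed_of_compact (by fun_prop) (fun _ _ _ => rfl) Function.injective_id denseRange_id
    obtain ⟨F, h1, h2, h3⟩ := H.exists_family
    refine ⟨F, h1, h2, fun X hX => ⟨(h3 X hX).1, (h3 X hX).2.1, ?_⟩⟩
    obtain ⟨h⟩ := (h3 X hX).2.2
    exact ⟨h.trans ((Homeomorph.prodUnique _ _).trans (Node.num.toHomeomorphOfDiscrete))⟩
  · obtain ⟨F, h1, h2, h3⟩ := Baire.isSeed.exists_family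
    refine ⟨F, h1, h2, fun X hX => ⟨(h3 X hX).1, (h3 X hX).2.1, ?_⟩⟩
    obtain ⟨h⟩ := (h3 X hX).2.2
    obtain ⟨k⟩ := nonempty_baire_homeomorph_irrational
    exact ⟨h.trans (((Node.num.toHomeomorphOfDiscrete.prodCongr (Homeomorph.refl _)).trans
      consHomeomorph).trans k)⟩
  · obtain ⟨s, hs, hd⟩ := TopologicalSpace.exists_countable_dense (ℕ → Bool)
    have : Countable s := hs
    have : Nonempty s := hd.nonempty.to_subtype
    have H : IsSeed (id : (ℕ → Bool) → ℕ → Bool) (fun _ => 0) (Subtype.val : s → ℕ → Bool) :=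
      isSeed_of_compact continuous_id Function.injective_id Subtype.val_injective hd.denseRange_val
    obtain ⟨F, h1, h2, h3⟩ := H.exists_family
    refine ⟨F, h1, h2, fun X hX => ⟨(h3 X hX).1, (h3 X hX).2.1, ?_⟩⟩
    obtain ⟨h⟩ := (h3 X hX).2.2
    exact ⟨h.trans ((Homeomorph.prodComm _ _).trans (cantorSetHomeomorphNatToBool.symm.prodCongr
      Node.num.toHomeomorphOfDiscrete))⟩

end SmoothFanPaper
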